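/- Upper bound 4.506 on the random 3-SAT satisfiability threshold: for each positive integer n let m_n = ⌈4.506·n⌉. Then the probability that a uniformly random formula F : Fin m_n → (Fin n × Bool)³ is satisfiable tends to 0 as n → ∞. -/

import Mathlib

section

open Finset

namespace RS

lemma count_le {ι T : Type} [Fintype ι] [DecidableEq ι] [Fintype T] [DecidableEq T] {n : ℕ}
    (τ : ι → T) (d : Fin n → T → ℕ) :
    #{f : ι → Fin n | ∀ v t, #{i | f i = v ∧ τ i = t} = d v t} * ∏ v, ∏ t, (d v t).factorial
      ≤ ∏ t, (#{i | τ i = t}).factorial := by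
  classical
  rcases Finset.eq_empty_or_nonempty
    ({f : ι → Fin n | ∀ v t, #{i | f i = v ∧ τ i = t} = d v t} : Finset (ι → Fin n)) with h | h
  · rw [h]; simp
  obtain ⟨f0, hf0⟩ := h
  simp only [mem_filter, mem_univ, true_and] at hf0
  -- stabilizers
  have h1 := DomMulAct.stabilizer_card (fun i => (f0 i, τ i))
  have h2 := DomMulAct.stabilizer_card τ
  have h3 : ∏ i : Fin n × T, (Fintype.card {a // (f0 a, τ a) = i}).factorial
      = ∏ v, ∏ t, (d v t).factorial := by
    rw [Fintype.prod_prod_type]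
    refine Finset.prod_congr rfl fun v _ => Finset.prod_congr rfl fun t _ => ?_
    rw [Fintype.card_subtype, ← hf0 v t]
    simp only [Prod.mk.injEq]
  have h4 : ∏ t : T, (Fintype.card {a // τ a = t}).factorial = ∏ t, (#{i | τ i = t}).factorial := by
    refine Finset.prod_congr rfl fun t _ => ?_
    rw [Fintype.card_subtype]
  have key : ∀ f : ι → Fin n, (∀ v t, #{i | f i = v ∧ τ i = t} = d v t) →
      ∃ g : Equiv.Perm ι, ∀ i, f0 (g i) = f i ∧ τ (g i) = τ i := by
    intro f hf
    have hc : ∀ p : Fin n × T, Nonempty ({a // (f a, τ a) = p} ≃ {a // (f0 a, τ a) = p}) := by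
      intro p
      refine Fintype.card_eq.mp ?_
      rw [Fintype.card_subtype, Fintype.card_subtype]
      have := hf p.1 p.2
      have h' := hf0 p.1 p.2
      simp only [Prod.ext_iff]
      rw [this, h']
    let e := fun p => Classical.choice (hc p)
    let g : ι ≃ ι := (Equiv.sigmaFiberEquiv (fun a => (f a, τ a))).symm.trans
      ((Equiv.sigmaCongrRight e).trans (Equiv.sigmaFiberEquiv (fun a => (f0 a, τ a))))
    refine ⟨g, fun i => ?_⟩
    have : (f0 (g i), τ (g i)) = (f i, τ i) := (e (f i, τ i) ⟨i, rfl⟩).2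
    exact ⟨congrArg Prod.fst this, congrArg Prod.snd this⟩
  choose! gg hgg using key
  rw [← h4, ← h2, ← h3, ← h1, ← Fintype.card_coe, ← Fintype.card_prod]
  refine Fintype.card_le_of_injective
    (fun q => (⟨q.2.1 * gg q.1.1, ?_⟩ : {g : Equiv.Perm ι // τ ∘ g = τ})) ?_
  · funext i
    have hq := (Finset.mem_filter.mp q.1.2).2
    have a := (hgg q.1.1 hq i).2
    have b := congrFun q.2.2 (gg q.1.1 i)
    simp only [Function.comp, Prod.mk.injEq] at b
    simp only [Function.comp, Equiv.Perm.coe_mul]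
    rw [b.2, a]
  · rintro ⟨⟨f, hf⟩, ⟨g, hg⟩⟩ ⟨⟨f', hf'⟩, ⟨g', hg'⟩⟩ heq
    simp only [Subtype.mk.injEq] at heq
    have hq := (Finset.mem_filter.mp hf).2
    have hq' := (Finset.mem_filter.mp hf').2
    have hff : f = f' := by
      funext i
      have b := congrFun hg (gg f i)
      have b' := congrFun hg' (gg f' i)
      simp only [Function.comp, Prod.mk.injEq] at b b'
      rw [← (hgg f hq i).1, ← (hgg f' hq' i).1, ← b.1, ← b'.1]
      have := congrArg (fun e : Equiv.Perm ι => e i) heq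
      simp only [Equiv.Perm.coe_mul, Function.comp] at this
      rw [this]
    subst hff
    simpa using heq

theorem genfun {ι T : Type} [Fintype ι] [DecidableEq ι] [Fintype T] [DecidableEq T] (n : ℕ)
    (τ : ι → T) (w : (T → ℕ) → ℝ) (hw : ∀ e, 0 ≤ w e) (x : T → ℝ) (hx : ∀ t, 0 < x t) (Φ : ℝ)
    (hΦ : ∑ e ∈ Fintype.piFinset (fun _ : T => range (Fintype.card ι + 1)),
      w e * ∏ t, (x t ^ e t / (e t).factorial) ≤ Φ) :
    ∑ f : ι → Fin n, ∏ v, w (fun t => #{i | f i = v ∧ τ i = t})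
      ≤ (∏ t, ((#{i | τ i = t}).factorial * ((x t) ^ #{i | τ i = t})⁻¹ : ℝ)) * Φ ^ n := by
  classical
  set cnt : (ι → Fin n) → Fin n → T → ℕ := fun f v t => #{i | f i = v ∧ τ i = t} with hcnt
  set box := Fintype.piFinset (fun _ : Fin n =>
    Fintype.piFinset (fun _ : T => range (Fintype.card ι + 1))) with hbox
  have hmem : ∀ f ∈ (univ : Finset (ι → Fin n)), cnt f ∈ box := by
    intro f _
    simp only [hbox, Fintype.mem_piFinset, mem_range, hcnt]
    intro v t
    exact Nat.lt_succ_of_le (Finset.card_le_univ _)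
  have e1 : ∑ f : ι → Fin n, ∏ v, w (cnt f v)
      = ∑ d ∈ box, ∑ f with cnt f = d, ∏ v, w (d v) := by
    rw [← Finset.sum_fiberwise_of_maps_to hmem]
    refine Finset.sum_congr rfl fun d _ => Finset.sum_congr rfl fun f hf => ?_
    rw [(Finset.mem_filter.mp hf).2]
  have hK : ∀ t, (0:ℝ) < (x t) ^ #{i | τ i = t} := fun t => pow_pos (hx t) _
  have e2 : ∀ d ∈ box, (∑ f with cnt f = d, ∏ v, w (d v))
      ≤ (∏ t, ((#{i | τ i = t}).factorial * ((x t) ^ #{i | τ i = t})⁻¹ : ℝ)) *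
        ∏ v, (w (d v) * ∏ t, (x t ^ d v t / (d v t).factorial)) := by
    intro d _
    rw [Finset.sum_const, nsmul_eq_mul]
    rcases Finset.eq_empty_or_nonempty ({f : ι → Fin n | cnt f = d} : Finset _) with h | ⟨f0, h⟩
    · rw [h]
      simp only [card_empty, Nat.cast_zero, zero_mul]
      refine mul_nonneg (prod_nonneg fun t _ => mul_nonneg (by positivity) (inv_nonneg.mpr (hK t).le))
        (prod_nonneg fun v _ => mul_nonneg (hw _) (prod_nonneg fun t _ => ?_))
      have := hx t
      positivity
    have hd : cnt f0 = d := (Finset.mem_filter.mp h).2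
    have hsum : ∀ t, ∑ v, d v t = #{i | τ i = t} := by
      intro t
      rw [← hd]
      simp only [hcnt]
      rw [Finset.card_eq_sum_card_fiberwise (f := f0) (t := univ) (by simp)]
      refine Finset.sum_congr rfl fun v _ => ?_
      rw [Finset.filter_filter]
      simp only [and_comm]
    have hc := count_le τ d
    have hset : ({f : ι → Fin n | cnt f = d} : Finset (ι → Fin n))
        = ({f : ι → Fin n | ∀ v t, #{i | f i = v ∧ τ i = t} = d v t} : Finset (ι → Fin n)) := by
      ext f
      simp only [mem_filter, mem_univ, true_and, hcnt, funext_iff]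
    rw [← hset] at hc
    have hc' : (#{f : ι → Fin n | cnt f = d} : ℝ) * ∏ v, ∏ t, ((d v t).factorial : ℝ)
        ≤ ∏ t, ((#{i | τ i = t}).factorial : ℝ) := by exact_mod_cast hc
    have hpos : (0:ℝ) < ∏ v, ∏ t, ((d v t).factorial : ℝ) :=
      prod_pos fun v _ => prod_pos fun t _ => by positivity
    have hx2 : ∏ v, ∏ t, (x t ^ d v t) = ∏ t, (x t) ^ #{i | τ i = t} := by
      rw [Finset.prod_comm]
      refine Finset.prod_congr rfl fun t _ => ?_
      rw [Finset.prod_pow_eq_pow_sum, hsum]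
    have hxp : (0:ℝ) < ∏ t, (x t) ^ #{i | τ i = t} := prod_pos fun t _ => hK t
    have hW : 0 ≤ ∏ v, w (d v) := prod_nonneg fun v _ => hw _
    simp only [prod_mul_distrib, prod_div_distrib, prod_inv_distrib]
    rw [hx2]
    have : (∏ t, ((#{i | τ i = t}).factorial : ℝ)) * (∏ t, (x t) ^ #{i | τ i = t})⁻¹ *
        ((∏ v, w (d v)) * ((∏ t, (x t) ^ #{i | τ i = t}) / ∏ v, ∏ t, ((d v t).factorial : ℝ)))
        = (∏ t, ((#{i | τ i = t}).factorial : ℝ)) / (∏ v, ∏ t, ((d v t).factorial : ℝ))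
          * ∏ v, w (d v) := by
      field_simp
    rw [this]
    refine mul_le_mul_of_nonneg_right ?_ hW
    rwa [le_div_iff₀ hpos]
  show ∑ f : ι → Fin n, ∏ v, w (cnt f v) ≤ _
  rw [e1]
  refine (Finset.sum_le_sum e2).trans ?_
  rw [← Finset.mul_sum]
  refine mul_le_mul_of_nonneg_left ?_
    (prod_nonneg fun t _ => mul_nonneg (by positivity) (inv_nonneg.mpr (hK t).le))
  rw [hbox, ← Finset.prod_univ_sum (fun _ : Fin n =>
    Fintype.piFinset (fun _ : T => range (Fintype.card ι + 1)))
    (fun _ e => w e * ∏ t, (x t ^ e t / (e t).factorial))]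
  rw [Finset.prod_const, Finset.card_univ, Fintype.card_fin]
  refine pow_le_pow_left₀ (Finset.sum_nonneg fun e _ => mul_nonneg (hw _)
    (prod_nonneg fun t _ => ?_)) hΦ n
  have := hx t
  positivity

end RS

end

section

open Finset

namespace RS

lemma fact_lb (n : ℕ) : ((n:ℝ) / Real.exp 1) ^ n ≤ (n.factorial : ℝ) := by
  have h := Real.pow_div_factorial_le_exp (n:ℝ) (by positivity) n
  rw [div_pow, ← Real.exp_nat_mul, mul_one]
  rw [div_le_iff₀ (by positivity)] at h ⊢
  linarith

lemma fact_ub (n : ℕ) : (n.factorial : ℝ) ≤ Real.exp 1 * (n + 1) * ((n:ℝ) / Real.exp 1) ^ n := by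
  have main : ∀ k : ℕ, ((k+1).factorial : ℝ) ≤
      Real.exp 1 * (k + 1) * (((k+1 : ℕ):ℝ) / Real.exp 1) ^ (k+1) := by
    intro k
    induction k with
    | zero =>
      simp
    | succ k ih =>
      rw [Nat.factorial_succ, Nat.cast_mul]
      have hk : (0:ℝ) < (k:ℝ) + 1 := by positivity
      have key : Real.exp 1 * ((k:ℝ)+1) ^ (k+2) ≤ ((k:ℝ)+2) ^ (k+2) := by
        have h1 : Real.exp (1 / ((k:ℝ)+2)) ≤ ((k:ℝ)+2)/((k:ℝ)+1) := by
          have h3 : 1 - 1 / ((k:ℝ)+2) ≤ Real.exp (-(1 / ((k:ℝ)+2))) := by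
            have := Real.add_one_le_exp (-(1 / ((k:ℝ)+2)))
            linarith
          have h4 : 1 - 1 / ((k:ℝ)+2) = ((k:ℝ)+1)/((k:ℝ)+2) := by field_simp; ring
          rw [h4, Real.exp_neg] at h3
          have := inv_anti₀ (by positivity) h3
          rwa [inv_inv, inv_div] at this
        have h2 := pow_le_pow_left₀ (Real.exp_pos _).le h1 (k+2)
        rw [← Real.exp_nat_mul, div_pow, le_div_iff₀ (by positivity)] at h2
        have h5 : ((k + 2 : ℕ) : ℝ) * (1 / ((k:ℝ)+2)) = 1 := by push_cast; field_simp
        rwa [h5] at h2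
      calc ((k + 1 + 1 : ℕ) : ℝ) * ((k+1).factorial : ℝ)
          ≤ ((k + 1 + 1 : ℕ) : ℝ) * (Real.exp 1 * (k + 1) * (((k+1 : ℕ):ℝ) / Real.exp 1) ^ (k+1)) :=
            mul_le_mul_of_nonneg_left ih (by positivity)
        _ = ((k:ℝ)+2) * (Real.exp 1 * ((k:ℝ)+1) ^ (k+2)) / (Real.exp 1) ^ (k+1) := by
            push_cast; rw [div_pow]; field_simp; ring
        _ ≤ ((k:ℝ)+2) * (((k:ℝ)+2) ^ (k+2)) / (Real.exp 1) ^ (k+1) := by gcongr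
        _ = _ := by
            push_cast; rw [div_pow]; field_simp; ring
  rcases n with _ | k
  · simp
  · refine (main k).trans ?_
    push_cast
    gcongr
    linarith

lemma fact_mode (a b : ℕ) : ((a.factorial : ℝ) * b.factorial) ≤
    (Real.exp 1 * (a + b + 1)) ^ 2 * (a+b).factorial *
      (((a:ℝ) / (a + b)) ^ a * ((b:ℝ) / (a + b)) ^ b) := by
  rcases Nat.eq_zero_or_pos (a + b) with h | h
  · have ha : a = 0 := by omega
    have hb : b = 0 := by omega
    subst ha hb
    simp
  have hN : (0:ℝ) < (a:ℝ) + b := by exact_mod_cast h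
  have h1 := fact_ub a
  have h2 := fact_ub b
  have h3 := fact_lb (a + b)
  push_cast at h3
  calc ((a.factorial : ℝ) * b.factorial)
      ≤ (Real.exp 1 * (a + 1) * ((a:ℝ) / Real.exp 1) ^ a) *
        (Real.exp 1 * (b + 1) * ((b:ℝ) / Real.exp 1) ^ b) :=
        mul_le_mul h1 h2 (by positivity) (by positivity)
    _ ≤ (Real.exp 1 * (a + b + 1) * ((a:ℝ) / Real.exp 1) ^ a) *
        (Real.exp 1 * (a + b + 1) * ((b:ℝ) / Real.exp 1) ^ b) := by
        gcongr
        · linarith [show (0:ℝ) ≤ b from by positivity]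
        · linarith [show (0:ℝ) ≤ a from by positivity]
    _ = (Real.exp 1 * (a + b + 1)) ^ 2 * (((a:ℝ) + b) / Real.exp 1) ^ (a+b) *
      (((a:ℝ) / (a + b)) ^ a * ((b:ℝ) / (a + b)) ^ b) := by
        simp only [div_pow, pow_add]
        field_simp
    _ ≤ _ := by gcongr

lemma fact_binom (a b : ℕ) (t : ℝ) (h0 : 0 < t) (h1 : t < 1) :
    ((a + b).factorial : ℝ) ≤ a.factorial * b.factorial * ((t⁻¹) ^ a * ((1 - t)⁻¹) ^ b) := by
  have h2 : 0 < 1 - t := by linarith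
  have h := Commute.add_pow (Commute.all t (1 - t)) (a + b)
  have h3 : t ^ a * (1-t) ^ (a + b - a) * ((a+b).choose a : ℝ) ≤ 1 := by
    have h4 : (t + (1 - t)) ^ (a + b) = 1 := by simp
    refine le_of_le_of_eq ?_ (h.symm.trans h4)
    refine Finset.single_le_sum (f := fun k => t ^ k * (1-t) ^ (a + b - k) * ((a+b).choose k : ℝ))
      (fun i _ => by positivity) (Finset.mem_range.mpr (show a < a + b + 1 by omega))
  rw [Nat.add_sub_cancel_left] at h3
  have h5 : ((a+b).choose a : ℝ) * a.factorial * b.factorial = (a+b).factorial := by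
    rw [Nat.choose_symm_add]
    exact_mod_cast Nat.add_choose_mul_factorial_mul_factorial a b
  rw [← h5, inv_pow, inv_pow, ← mul_inv, ← div_eq_mul_inv, le_div_iff₀ (by positivity)]
  have h6 : (0:ℝ) ≤ (a.factorial : ℝ) * b.factorial := by positivity
  nlinarith

lemma sigma_bound (m K M P N : ℕ) (h1 : K + M = m) (h2 : K + P + N = 3 * m) (t : ℝ)
    (h0 : 0 < t) (ht : t < 1) :
    (K.factorial : ℝ) * P.factorial * N.factorial ≤
      (Real.exp 1 * (3 * m + 1)) ^ 4 * (m.factorial * (2*m).factorial) * (((1 - t)⁻¹) ^ 2) ^ m *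
      (((K:ℝ)/m) ^ K * ((1 - (K:ℝ)/m) / t) ^ M *
        (((N:ℝ)/(N + P)) ^ N * (1 - (N:ℝ)/(N + P)) ^ P)) := by
  have hPN : N + P = M + 2 * m := by omega
  have a1 := fact_mode N P
  have a2 := fact_mode K M
  have a3 := fact_binom M (2*m) t h0 ht
  rw [hPN] at a1
  rw [h1] at a2
  have ht' : 0 < 1 - t := by linarith
  have hb1 : (Real.exp 1 * ((N:ℝ) + P + 1)) ^ 2 ≤ (Real.exp 1 * (3 * m + 1)) ^ 2 := by
    have : (N:ℝ) + P ≤ 3 * m := by exact_mod_cast (by omega : N + P ≤ 3 * m)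
    gcongr
  have hb2 : (Real.exp 1 * ((K:ℝ) + M + 1)) ^ 2 ≤ (Real.exp 1 * (3 * m + 1)) ^ 2 := by
    have : (K:ℝ) + M ≤ 3 * m := by exact_mod_cast (by omega : K + M ≤ 3 * m)
    gcongr
  have hKM : (K:ℝ) + M = m := by exact_mod_cast h1
  have e1 : ((P:ℝ)/(N + P)) ^ P = (1 - (N:ℝ)/(N + P)) ^ P := by
    rcases Nat.eq_zero_or_pos P with h | h
    · subst h; simp
    · have : (0:ℝ) < P := by exact_mod_cast h
      congr 1
      field_simp
      ring
  have e2 : ((M:ℝ)/(K + M)) ^ M = (1 - (K:ℝ)/m) ^ M := by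
    rcases Nat.eq_zero_or_pos M with h | h
    · subst h; simp
    · have : (0:ℝ) < M := by exact_mod_cast h
      rw [← hKM]
      congr 1
      field_simp
      ring
  have hu : 0 ≤ (1 - (K:ℝ)/m) ^ M := by rw [← e2]; positivity
  have hp : 0 ≤ (1 - (N:ℝ)/(N + P)) ^ P := by rw [← e1]; positivity
  rw [e1] at a1
  rw [e2, hKM] at a2
  rw [hKM] at hb2
  set pp := ((N:ℝ)/(N + P)) ^ N * (1 - (N:ℝ)/(N + P)) ^ P with hpp
  have hpp0 : 0 ≤ pp := mul_nonneg (by positivity) hp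
  set uu := ((K:ℝ)/m) ^ K
  set vv := (1 - (K:ℝ)/m) ^ M with hvv
  have huu0 : 0 ≤ uu := by positivity
  set E := Real.exp 1 * (3 * (m:ℝ) + 1) with hE
  have hE0 : 0 < E := by positivity
  calc (K.factorial : ℝ) * P.factorial * N.factorial
      = K.factorial * (N.factorial * P.factorial) := by ring
    _ ≤ K.factorial * (E ^ 2 * (M + 2*m).factorial * pp) := by
        refine mul_le_mul_of_nonneg_left (a1.trans ?_) (by positivity)
        gcongr
    _ ≤ K.factorial * (E ^ 2 * (M.factorial * (2*m).factorial * ((t⁻¹) ^ M * ((1 - t)⁻¹) ^ (2*m)))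
          * pp) := by gcongr
    _ = (K.factorial * M.factorial) * (E ^ 2 * (2*m).factorial * ((t⁻¹) ^ M * ((1 - t)⁻¹) ^ (2*m))
          * pp) := by ring
    _ ≤ (E ^ 2 * m.factorial * (uu * vv)) *
          (E ^ 2 * (2*m).factorial * ((t⁻¹) ^ M * ((1 - t)⁻¹) ^ (2*m)) * pp) := by
        refine mul_le_mul_of_nonneg_right (a2.trans ?_) (by positivity)
        gcongr
    _ = _ := by
        rw [pow_mul, div_pow, inv_pow t M]
        ring

end RS

end

section

open Finset

namespace RS

/-- which slots are satisfied by the assignment -/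
def sg {m n : ℕ} (A : Fin n → Bool) (F : Fin m × Fin 3 → Fin n × Bool) : Fin m × Fin 3 → Bool :=
  fun a => decide (A (F a).1 = (F a).2)

/-- slot types: `0` critical, `1` true and not critical, `2` false -/
def ty {m : ℕ} (σ : Fin m × Fin 3 → Bool) (a : Fin m × Fin 3) : Fin 3 :=
  if σ a = true then (if ∀ j, σ (a.1, j) = true → j = a.2 then 0 else 1) else 2

def sat {m : ℕ} (σ : Fin m × Fin 3 → Bool) : Prop := ∀ i, ∃ j, σ (i, j) = true

instance {m : ℕ} (σ : Fin m × Fin 3 → Bool) : Decidable (sat σ) := by unfold sat; infer_instance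

def cnt {ι T : Type} [Fintype ι] [DecidableEq T] {n : ℕ} (τ : ι → T) (f : ι → Fin n) (v : Fin n)
    (t : T) : ℕ := #{i | f i = v ∧ τ i = t}

def occ {m n : ℕ} (F : Fin m × Fin 3 → Fin n × Bool) (v : Fin n) (b : Bool) : ℕ :=
  #{a | F a = (v, b)}

def bad {m n : ℕ} (F : Fin m × Fin 3 → Fin n × Bool) : ℕ :=
  #{i : Fin m | ∃ j j', j ≠ j' ∧ (F (i, j)).1 = (F (i, j')).1}

def Cd (b : Bool) (e : Fin 3 → ℕ) : Prop :=
  (b = true ∧ e 2 ≤ e 0 + e 1) ∨ (b = false ∧ e 2 < e 0 + e 1) ∨ 1 ≤ e 0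

instance (b : Bool) (e : Fin 3 → ℕ) : Decidable (Cd b e) := by unfold Cd; infer_instance

noncomputable def Wt (c : ℕ → ℕ → ℝ) (η : ℝ) (b : Bool) (e : Fin 3 → ℕ) : ℝ :=
  c (e 0 + e 1) (e 2) * (if Cd b e then 1 else η)

lemma ty_eq_two {m : ℕ} (σ : Fin m × Fin 3 → Bool) (a) : ty σ a = 2 ↔ σ a = false := by
  unfold ty; split_ifs <;> simp_all

lemma ty_eq_zero {m : ℕ} (σ : Fin m × Fin 3 → Bool) (a) :
    ty σ a = 0 ↔ σ a = true ∧ ∀ j, σ (a.1, j) = true → j = a.2 := by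
  unfold ty; split_ifs <;> simp_all

lemma cnt_true {m n : ℕ} (σ : Fin m × Fin 3 → Bool) (f : Fin m × Fin 3 → Fin n) (v : Fin n) :
    cnt (ty σ) f v 0 + cnt (ty σ) f v 1 = #{a | f a = v ∧ σ a = true} := by
  unfold cnt
  rw [← Finset.card_union_of_disjoint]
  · congr 1
    ext a
    simp only [mem_union, mem_filter, mem_univ, true_and]
    have h2 := ty_eq_two σ a
    have : ty σ a = 0 ∨ ty σ a = 1 ∨ ty σ a = 2 := by
      generalize ty σ a = t; revert t; decide
    cases hh : σ a
    · have := h2.2 hh; simp [this]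
    · have h3 : ty σ a ≠ 2 := fun h => by simp [h2.1 h] at hh
      tauto
  · rw [Finset.disjoint_filter]
    intro a _ h h'
    rw [h.2] at h'
    exact absurd h'.2 (by decide)

lemma cnt_false {m n : ℕ} (σ : Fin m × Fin 3 → Bool) (f : Fin m × Fin 3 → Fin n) (v : Fin n) :
    cnt (ty σ) f v 2 = #{a | f a = v ∧ σ a = false} := by
  unfold cnt
  simp only [ty_eq_two]

lemma occ_true {m n : ℕ} (A : Fin n → Bool) (F : Fin m × Fin 3 → Fin n × Bool) (v : Fin n) :
    #{a | (F a).1 = v ∧ sg A F a = true} = occ F v (A v) := by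
  unfold occ sg
  congr 1
  ext a
  simp only [mem_filter, mem_univ, true_and, decide_eq_true_eq, Prod.ext_iff]
  constructor
  · rintro ⟨h, h'⟩; subst h; exact ⟨rfl, h'.symm⟩
  · rintro ⟨h, h'⟩; subst h; exact ⟨rfl, h'.symm⟩

lemma occ_false {m n : ℕ} (A : Fin n → Bool) (F : Fin m × Fin 3 → Fin n × Bool) (v : Fin n) :
    #{a | (F a).1 = v ∧ sg A F a = false} = occ F v (!A v) := by
  unfold occ sg
  congr 1
  ext a
  simp only [mem_filter, mem_univ, true_and, decide_eq_false_iff_not, Prod.ext_iff]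
  constructor
  · rintro ⟨h, h'⟩; subst h; refine ⟨rfl, ?_⟩
    revert h'; cases A (F a).1 <;> cases (F a).2 <;> simp
  · rintro ⟨h, h'⟩; subst h; refine ⟨rfl, ?_⟩
    rw [h']; cases A (F a).1 <;> simp

theorem lower {m n : ℕ} (c : ℕ → ℕ → ℝ) (hc : ∀ s q, 0 ≤ c s q) (hs : ∀ s q, c s q = c q s)
    (η : ℝ) (h0 : 0 < η) (h1 : η ≤ 1) (F : Fin m × Fin 3 → Fin n × Bool)
    (hF : ∃ A, sat (sg A F)) :
    ∃ A, sat (sg A F) ∧ η ^ bad F * ∏ v, c (occ F v true) (occ F v false) ≤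
      ∏ v, Wt c η (A v) (cnt (ty (sg A F)) (fun a => (F a).1) v) := by
  classical
  let pref : Fin n → Bool := fun v => decide (occ F v false ≤ occ F v true)
  obtain ⟨A, hA, hmax⟩ := Finset.exists_max_image
    ({A : Fin n → Bool | sat (sg A F)} : Finset (Fin n → Bool))
    (fun A => #{v | A v = pref v}) (by
      obtain ⟨A, hA⟩ := hF
      exact ⟨A, by simpa using hA⟩)
  have hsat : sat (sg A F) := by simpa using hA
  refine ⟨A, hsat, ?_⟩
  set e := cnt (ty (sg A F)) (fun a => (F a).1) with he
  have ht : ∀ v, e v 0 + e v 1 = occ F v (A v) := fun v => by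
    rw [he, cnt_true, occ_true]
  have hf : ∀ v, e v 2 = occ F v (!A v) := fun v => by
    rw [he, cnt_false, occ_false]
  have hcv : ∀ v, c (e v 0 + e v 1) (e v 2) = c (occ F v true) (occ F v false) := by
    intro v
    rw [ht, hf]
    cases A v
    · exact hs _ _
    · rfl
  have hprod : ∏ v, Wt c η (A v) (e v)
      = (∏ v, c (occ F v true) (occ F v false)) * η ^ #{v | ¬ Cd (A v) (e v)} := by
    unfold Wt
    rw [Finset.prod_mul_distrib, Finset.prod_ite]
    simp only [hcv, prod_const_one, one_mul, prod_const]
  rw [hprod, mul_comm]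
  refine mul_le_mul_of_nonneg_left ?_ (prod_nonneg fun v _ => hc _ _)
  refine pow_le_pow_of_le_one h0.le h1 ?_
  -- injection
  have key : ∀ v, ¬ Cd (A v) (e v) → ∃ i : Fin m,
      (∃ j j', j ≠ j' ∧ (F (i, j)).1 = (F (i, j')).1) ∧
      ∀ j, sg A F (i, j) = true → (F (i, j)).1 = v := by
    intro v hv
    have hnp : A v ≠ pref v := by
      intro h
      apply hv
      unfold Cd
      rw [ht, hf]
      simp only [pref] at h
      cases hb : A v
      · rw [hb] at h
        have := of_decide_eq_false h.symm
        right; left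
        simpa using this
      · rw [hb] at h
        have := of_decide_eq_true h.symm
        left
        simpa using this
    have hk : e v 0 = 0 := by
      by_contra h
      exact hv (Or.inr (Or.inr (Nat.one_le_iff_ne_zero.mpr h)))
    let A' := Function.update A v (!A v)
    have hA' : ¬ sat (sg A' F) := by
      intro h
      have := hmax A' (by simpa using h)
      have hlt : #{u | A u = pref u} < #{u | A' u = pref u} := by
        refine Finset.card_lt_card ?_
        rw [Finset.ssubset_iff_of_subset]
        · refine ⟨v, ?_, by simpa using hnp⟩
          simp only [mem_filter, mem_univ, true_and, A', Function.update_self]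
          revert hnp
          cases A v <;> cases pref v <;> simp
        · intro u hu
          simp only [mem_filter, mem_univ, true_and] at hu ⊢
          have huv : u ≠ v := by rintro rfl; exact hnp hu
          simp only [A', Function.update_of_ne huv, hu]
      omega
    unfold sat at hA'
    push Not at hA'
    obtain ⟨i, hi⟩ := hA'
    have hall : ∀ j, sg A F (i, j) = true → (F (i, j)).1 = v := by
      intro j hj
      by_contra hne
      apply hi j
      unfold sg at hj ⊢
      simp only [A', Function.update_of_ne hne]
      exact hj
    refine ⟨i, ?_, hall⟩
    obtain ⟨j, hj⟩ := hsat i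
    have h0 : ty (sg A F) (i, j) ≠ 0 := by
      intro h
      have : 0 < e v 0 := by
        rw [he]
        unfold cnt
        rw [Finset.card_pos]
        exact ⟨(i, j), by simp [h, hall j hj]⟩
      omega
    rw [Ne, ty_eq_zero] at h0
    push Not at h0
    obtain ⟨j', hj', hne⟩ := h0 hj
    exact ⟨j', j, hne, by rw [hall j hj, hall j' hj']⟩
  rcases isEmpty_or_nonempty (Fin m) with hm | hm
  · have hz : ({v | ¬ Cd (A v) (e v)} : Finset (Fin n)) = ∅ := by
      ext v
      simp only [mem_filter, mem_univ, true_and, notMem_empty, iff_false]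
      intro hv
      obtain ⟨i, -⟩ := key v hv
      exact hm.elim i
    rw [hz]
    simp
  choose! g hg using key
  unfold bad
  refine Finset.card_le_card_of_injOn g ?_ ?_
  · intro v hv
    simp only [coe_filter, mem_univ, true_and, Set.mem_setOf_eq] at hv ⊢
    exact (hg v hv).1
  · intro v hv u hu heq
    simp only [coe_filter, mem_univ, true_and, Set.mem_setOf_eq] at hv hu
    obtain ⟨j, hj⟩ := hsat (g v)
    rw [← (hg v hv).2 j hj]
    rw [heq] at hj ⊢
    exact (hg u hu).2 j hj

end RS

end

section

open Finset

namespace RS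

/-- local type of a slot in a clause -/
def tyl (ρ : Fin 3 → Bool) (j : Fin 3) : Fin 3 :=
  if ρ j = true then (if ∀ j', ρ j' = true → j' = j then 0 else 1) else 2

def nl (t : Fin 3) (ρ : Fin 3 → Bool) : ℕ := #{j | tyl ρ j = t}

lemma nl_sum : ∀ ρ : Fin 3 → Bool, nl 0 ρ + nl 1 ρ + nl 2 ρ = 3 := by decide
lemma nl_le : ∀ ρ : Fin 3 → Bool, nl 0 ρ ≤ 1 := by decide

lemma nl_ms : (Finset.univ.filter (fun ρ : Fin 3 → Bool => ∃ j, ρ j = true)).val.map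
    (fun ρ => (nl 0 ρ, nl 1 ρ, nl 2 ρ)) =
    {(1, 0, 2), (1, 0, 2), (1, 0, 2), (0, 2, 1), (0, 2, 1), (0, 2, 1), (0, 3, 0)} := by
  decide

lemma clause_sum (a b g d : ℝ) :
    ∑ ρ : Fin 3 → Bool with (∃ j, ρ j = true),
      a ^ nl 0 ρ * b ^ (1 - nl 0 ρ) * (g ^ nl 1 ρ * d ^ nl 2 ρ)
      = 3 * a * d ^ 2 + b * (3 * g ^ 2 * d + g ^ 3) := by
  have h : ∑ ρ : Fin 3 → Bool with (∃ j, ρ j = true),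
      a ^ nl 0 ρ * b ^ (1 - nl 0 ρ) * (g ^ nl 1 ρ * d ^ nl 2 ρ)
      = (((Finset.univ.filter (fun ρ : Fin 3 → Bool => ∃ j, ρ j = true)).val.map
    (fun ρ => (nl 0 ρ, nl 1 ρ, nl 2 ρ))).map
      (fun k : ℕ × ℕ × ℕ => a ^ k.1 * b ^ (1 - k.1) * (g ^ k.2.1 * d ^ k.2.2))).sum := by
    rw [Multiset.map_map]; rfl
  rw [h, nl_ms]
  simp
  ring

lemma ty_tyl {m : ℕ} (σ : Fin m × Fin 3 → Bool) (i : Fin m) (j : Fin 3) :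
    ty σ (i, j) = tyl (fun j => σ (i, j)) j := rfl

lemma num_ty {m : ℕ} (σ : Fin m × Fin 3 → Bool) (t : Fin 3) :
    #{a | ty σ a = t} = ∑ i, nl t (fun j => σ (i, j)) := by
  rw [Finset.card_filter, Fintype.sum_prod_type]
  refine Finset.sum_congr rfl fun i _ => ?_
  unfold nl
  rw [Finset.card_filter]
  rfl

lemma prod_clause {m : ℕ} (σ : Fin m × Fin 3 → Bool) (a b g d : ℝ) :
    a ^ #{s | ty σ s = 0} * b ^ (m - #{s | ty σ s = 0}) *
      (g ^ #{s | ty σ s = 1} * d ^ #{s | ty σ s = 2}) =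
    ∏ i, (a ^ nl 0 (fun j => σ (i, j)) * b ^ (1 - nl 0 (fun j => σ (i, j))) *
      (g ^ nl 1 (fun j => σ (i, j)) * d ^ nl 2 (fun j => σ (i, j)))) := by
  have hM : m - #{s | ty σ s = 0} = ∑ i : Fin m, (1 - nl 0 (fun j => σ (i, j))) := by
    rw [num_ty, Finset.sum_tsub_distrib _ (fun i _ => nl_le _)]
    simp
  rw [hM]
  simp only [num_ty, prod_mul_distrib, prod_pow_eq_pow_sum]

lemma sum_sat {m : ℕ} (h : (Fin 3 → Bool) → ℝ) :
    ∑ σ : Fin m × Fin 3 → Bool with sat σ, ∏ i, h (fun j => σ (i, j))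
      = (∑ ρ : Fin 3 → Bool with (∃ j, ρ j = true), h ρ) ^ m := by
  have := Finset.prod_univ_sum (fun _ : Fin m => Finset.univ.filter
    (fun ρ : Fin 3 → Bool => ∃ j, ρ j = true)) (fun _ ρ => h ρ)
  rw [Finset.prod_const, Finset.card_univ, Fintype.card_fin] at this
  rw [this]
  refine Finset.sum_nbij' (fun σ i j => σ (i, j)) (fun g a => g a.1 a.2) ?_ ?_ ?_ ?_ ?_
  · intro σ hσ
    have := (Finset.mem_filter.mp hσ).2
    simpa [sat] using this
  · intro g hg
    refine Finset.mem_filter.mpr ⟨mem_univ _, ?_⟩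
    simpa [sat] using hg
  · intro σ _; rfl
  · intro g _; rfl
  · intro σ _; rfl

lemma exchange {m n : ℕ} (A : Fin n → Bool)
    (G : (Fin m × Fin 3 → Bool) → (Fin m × Fin 3 → Fin n) → ℝ) :
    ∑ F : Fin m × Fin 3 → Fin n × Bool, G (sg A F) (fun a => (F a).1) = ∑ σ, ∑ f, G σ f := by
  rw [← Fintype.sum_prod_type' (f := G)]
  let E : (Fin m × Fin 3 → Fin n × Bool) ≃
      (Fin m × Fin 3 → Bool) × (Fin m × Fin 3 → Fin n) :=
    { toFun := fun F => (sg A F, fun a => (F a).1)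
      invFun := fun q a => (q.2 a, if q.1 a = true then A (q.2 a) else !A (q.2 a))
      left_inv := by
        intro F
        funext a
        simp only [sg, decide_eq_true_eq]
        refine Prod.ext rfl ?_
        simp only
        split_ifs with h
        · exact h
        · revert h; cases A (F a).1 <;> cases (F a).2 <;> simp
      right_inv := by
        rintro ⟨σ, f⟩
        refine Prod.ext ?_ rfl
        funext a
        simp only [sg]
        by_cases h : σ a = true
        · simp [h]
        · simp [h] }
  exact Fintype.sum_equiv E _ _ (fun F => rfl)

noncomputable def wbar (c : ℕ → ℕ → ℝ) (η : ℝ) (e : Fin 3 → ℕ) : ℝ := Wt c η true e + Wt c η false e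

lemma main_exchange {m n : ℕ} (c : ℕ → ℕ → ℝ) (η : ℝ) :
    ∑ A : Fin n → Bool, ∑ F : Fin m × Fin 3 → Fin n × Bool,
      (if sat (sg A F) then ∏ v, Wt c η (A v) (cnt (ty (sg A F)) (fun a => (F a).1) v) else 0)
    = ∑ σ : Fin m × Fin 3 → Bool with sat σ, ∑ f : Fin m × Fin 3 → Fin n,
        ∏ v, wbar c η (cnt (ty σ) f v) := by
  have h1 : ∀ A : Fin n → Bool, ∑ F : Fin m × Fin 3 → Fin n × Bool,
      (if sat (sg A F) then ∏ v, Wt c η (A v) (cnt (ty (sg A F)) (fun a => (F a).1) v) else 0)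
      = ∑ σ, ∑ f, if sat σ then ∏ v, Wt c η (A v) (cnt (ty σ) f v) else 0 := fun A =>
    exchange A (fun σ f => if sat σ then ∏ v, Wt c η (A v) (cnt (ty σ) f v) else 0)
  simp only [h1]
  rw [Finset.sum_comm, Finset.sum_filter]
  refine Finset.sum_congr rfl fun σ _ => ?_
  rw [Finset.sum_comm]
  split_ifs with hs
  · refine Finset.sum_congr rfl fun f _ => ?_
    have := Finset.prod_univ_sum (fun _ : Fin n => (Finset.univ : Finset Bool))
      (fun v b => Wt c η b (cnt (ty σ) f v))
    rw [Fintype.piFinset_univ] at this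
    rw [← this]
    refine Finset.prod_congr rfl fun v _ => ?_
    simp [wbar]
  · simp

theorem main_upper {m n : ℕ} (c : ℕ → ℕ → ℝ) (hc : ∀ s q, 0 ≤ c s q) (η : ℝ) (h0 : 0 < η) (D : ℝ)
    (hnum : ∀ p : ℝ, 0 ≤ p → p ≤ 1 → ∃ x y z t A' Φ : ℝ, 0 < x ∧ 0 < y ∧ 0 < z ∧ 0 < t ∧ t < 1 ∧
      3 * (1 / x) * (p / z) ^ 2 ≤ A' ∧
      3 * ((1 - p) / y) ^ 2 * (p / z) + ((1 - p) / y) ^ 3 ≤ t * A' ∧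
      (∑ e ∈ Fintype.piFinset (fun _ : Fin 3 => range (Fintype.card (Fin m × Fin 3) + 1)),
        wbar c η e * ∏ i, (![x, y, z] i ^ e i / (e i).factorial) ≤ Φ) ∧
      A' ^ m * (((1 - t)⁻¹) ^ 2) ^ m * Φ ^ n ≤ D) :
    ∑ σ : Fin m × Fin 3 → Bool with sat σ, ∑ f : Fin m × Fin 3 → Fin n,
        ∏ v, wbar c η (cnt (ty σ) f v) ≤
      ((m + 1) * (3 * m + 1)) * ((Real.exp 1 * (3 * m + 1)) ^ 4 *
        (m.factorial * (2*m).factorial)) * D := by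
  classical
  have hWt : ∀ b e, 0 ≤ Wt c η b e := by
    intro b e
    unfold Wt
    refine mul_nonneg (hc _ _) ?_
    split_ifs <;> linarith
  have hwb : ∀ e, 0 ≤ wbar c η e := fun e => add_nonneg (hWt _ _) (hWt _ _)
  have hKm : ∀ σ : Fin m × Fin 3 → Bool, #{a | ty σ a = 0} ≤ m := by
    intro σ
    rw [num_ty]
    refine (Finset.sum_le_sum (fun i _ => nl_le _)).trans ?_
    simp
  have hKPN : ∀ σ : Fin m × Fin 3 → Bool,
      #{a | ty σ a = 0} + #{a | ty σ a = 1} + #{a | ty σ a = 2} = 3 * m := by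
    intro σ
    simp only [num_ty, ← Finset.sum_add_distrib, nl_sum]
    simp [mul_comm]
  set S : Finset (Fin m × Fin 3 → Bool) := {σ | sat σ} with hS
  set grid := range (m + 1) ×ˢ range (3 * m + 1) with hgrid
  set key : (Fin m × Fin 3 → Bool) → ℕ × ℕ := fun σ => (#{a | ty σ a = 0}, #{a | ty σ a = 2})
    with hkey
  have hmaps : ∀ σ ∈ S, key σ ∈ grid := by
    intro σ _
    have a := hKm σ
    have b := hKPN σ
    simp only [hgrid, hkey, mem_product, mem_range]
    omega
  rw [← Finset.sum_fiberwise_of_maps_to hmaps]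
  set E : ℝ := (Real.exp 1 * (3 * m + 1)) ^ 4 * (m.factorial * (2*m).factorial) with hE
  have hE0 : 0 < E := by positivity
  have hD : 0 ≤ D := by
    obtain ⟨x, y, z, t, A', Φ, hx, hy, hz, ht0, ht1, hA, hB, hΦ, hD⟩ := hnum 0 le_rfl zero_le_one
    have hA0 : 0 ≤ A' := le_trans (by positivity) hA
    have hΦ0 : 0 ≤ Φ := by
      refine le_trans (Finset.sum_nonneg fun e _ => mul_nonneg (hwb _) (prod_nonneg fun i _ => ?_)) hΦ
      have : 0 < (![x, y, z] : Fin 3 → ℝ) i := by fin_cases i <;> assumption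
      positivity
    exact le_trans (by positivity) hD
  have main : ∀ g ∈ grid, (∑ σ ∈ S with key σ = g, ∑ f : Fin m × Fin 3 → Fin n,
      ∏ v, wbar c η (cnt (ty σ) f v)) ≤ E * D := by
    rintro ⟨K, N⟩ _
    rcases Finset.eq_empty_or_nonempty ({σ ∈ S | key σ = (K, N)} : Finset (Fin m × Fin 3 → Bool))
      with hemp | ⟨σ0, hσ0⟩
    · rw [hemp, Finset.sum_empty]; positivity
    have hk0 := (Finset.mem_filter.mp hσ0).2
    simp only [hkey, Prod.mk.injEq] at hk0
    have hK := hKm σ0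
    have hN := hKPN σ0
    obtain ⟨P, hP⟩ : ∃ P, P = #{a | ty σ0 a = 1} := ⟨_, rfl⟩
    rw [hk0.1, hk0.2, ← hP] at hN
    rw [hk0.1] at hK
    have hp0 : 0 ≤ (N:ℝ)/(N + P) := by positivity
    have hp1 : (N:ℝ)/(N + P) ≤ 1 := div_le_one_of_le₀ (by linarith [show (0:ℝ) ≤ P by positivity])
      (by positivity)
    have hu0 : 0 ≤ (K:ℝ)/m := by positivity
    have hu1 : (K:ℝ)/m ≤ 1 := div_le_one_of_le₀ (by exact_mod_cast hK) (by positivity)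
    obtain ⟨x, y, z, t, A', Φ, hx, hy, hz, ht0, ht1, hA, hB, hΦ, hDD⟩ := hnum _ hp0 hp1
    set p := (N:ℝ)/(N + P) with hp
    set u := (K:ℝ)/m with hu
    have hA0 : 0 ≤ A' := le_trans (by positivity) hA
    have hxi : ∀ i, 0 < (![x, y, z] : Fin 3 → ℝ) i := by intro i; fin_cases i <;> assumption
    have hΦ0 : 0 ≤ Φ := by
      refine le_trans (Finset.sum_nonneg fun e _ => mul_nonneg (hwb _) (prod_nonneg fun i _ => ?_)) hΦ
      have := hxi i
      positivity
    have ht' : 0 < 1 - t := by linarith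
    have hp' : 0 ≤ 1 - p := by linarith
    have hu' : 0 ≤ 1 - u := by linarith
    set hw : (Fin 3 → Bool) → ℝ := fun ρ => (u / x) ^ nl 0 ρ * ((1 - u) / t) ^ (1 - nl 0 ρ) *
      (((1 - p) / y) ^ nl 1 ρ * (p / z) ^ nl 2 ρ) with hhw
    have hhw0 : ∀ ρ, 0 ≤ hw ρ := fun ρ => by simp only [hhw]; positivity
    have step : ∀ σ ∈ ({σ ∈ S | key σ = (K, N)} : Finset (Fin m × Fin 3 → Bool)),
        ∑ f : Fin m × Fin 3 → Fin n, ∏ v, wbar c η (cnt (ty σ) f v) ≤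
        (E * (((1 - t)⁻¹) ^ 2) ^ m * Φ ^ n) * ∏ i, hw (fun j => σ (i, j)) := by
      intro σ hσ
      have hk := (Finset.mem_filter.mp hσ).2
      simp only [hkey, Prod.mk.injEq] at hk
      have hN' := hKPN σ
      have hP' : #{a | ty σ a = 1} = P := by omega
      have hg := genfun n (ty σ) (wbar c η) hwb ![x, y, z] hxi Φ hΦ
      refine hg.trans ?_
      rw [Fin.prod_univ_three]
      simp only [Matrix.cons_val_zero, Matrix.cons_val_one, Matrix.cons_val]
      have hpc := prod_clause σ (u / x) ((1 - u) / t) ((1 - p) / y) (p / z)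
      simp only [hhw]
      rw [← hpc, hk.1, hk.2, hP']
      have hsb := sigma_bound m K (m - K) P N (by omega) hN t ht0 ht1
      rw [← hp, ← hu, ← hE] at hsb
      have hxyz : 0 ≤ (x ^ K)⁻¹ * (y ^ P)⁻¹ * (z ^ N)⁻¹ * Φ ^ n := by positivity
      calc _ = ((K.factorial : ℝ) * P.factorial * N.factorial) *
            ((x ^ K)⁻¹ * (y ^ P)⁻¹ * (z ^ N)⁻¹ * Φ ^ n) := by ring
        _ ≤ _ := mul_le_mul_of_nonneg_right hsb hxyz
        _ = _ := by
          simp only [div_pow]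
          ring
    refine (Finset.sum_le_sum step).trans ?_
    rw [← Finset.mul_sum]
    have hsum : ∑ σ ∈ S with key σ = (K, N), ∏ i, hw (fun j => σ (i, j)) ≤ A' ^ m := by
      calc _ ≤ ∑ σ ∈ S, ∏ i, hw (fun j => σ (i, j)) :=
            Finset.sum_le_sum_of_subset_of_nonneg (Finset.filter_subset _ _)
              (fun σ _ _ => prod_nonneg fun i _ => hhw0 _)
        _ = (∑ ρ : Fin 3 → Bool with (∃ j, ρ j = true), hw ρ) ^ m := sum_sat hw
        _ ≤ A' ^ m := by
          refine pow_le_pow_left₀ (Finset.sum_nonneg fun ρ _ => hhw0 ρ) ?_ m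
          simp only [hhw]
          rw [clause_sum]
          have e1 : 3 * (u / x) * (p / z) ^ 2 ≤ u * A' := by
            calc _ = u * (3 * (1 / x) * (p / z) ^ 2) := by ring
              _ ≤ _ := mul_le_mul_of_nonneg_left hA hu0
          have e2 : (1 - u) / t * (3 * ((1 - p) / y) ^ 2 * (p / z) + ((1 - p) / y) ^ 3)
              ≤ (1 - u) * A' := by
            calc _ ≤ (1 - u) / t * (t * A') := mul_le_mul_of_nonneg_left hB (by positivity)
              _ = _ := by field_simp
          linarith
    calc _ ≤ (E * (((1 - t)⁻¹) ^ 2) ^ m * Φ ^ n) * A' ^ m :=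
          mul_le_mul_of_nonneg_left hsum (by positivity)
      _ = E * (A' ^ m * (((1 - t)⁻¹) ^ 2) ^ m * Φ ^ n) := by ring
      _ ≤ _ := mul_le_mul_of_nonneg_left hDD hE0.le
  refine (Finset.sum_le_sum main).trans ?_
  rw [Finset.sum_const, nsmul_eq_mul, hgrid, Finset.card_product, card_range, card_range]
  push_cast
  exact le_of_eq (by ring)

end RS

end

section

open Finset

namespace RS

def gg (s q : ℕ) : ℕ := if s < q then 2 else if s = q then 1 else 0

lemma wbar_eq (c : ℕ → ℕ → ℝ) (η : ℝ) (e : Fin 3 → ℕ) :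
    wbar c η e = c (e 0 + e 1) (e 2) *
      (2 - if e 0 = 0 then (1 - η) * gg (e 0 + e 1) (e 2) else 0) := by
  unfold wbar Wt Cd gg
  rcases Nat.eq_zero_or_pos (e 0) with h | h
  · rcases lt_trichotomy (e 1) (e 2) with h' | h' | h'
    · have : ¬ (e 2 ≤ e 1) := by omega
      have h3 : ¬ (e 2 < e 1) := by omega
      simp [h, h', this, h3]; ring
    · simp [h, h']; ring
    · have : (e 2 ≤ e 1) := by omega
      have h3 : ¬ (e 1 < e 2) := by omega
      have h4 : ¬ (e 1 = e 2) := by omega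
      simp [h, h', this, h3, h4]; ring
  · have h1 : 1 ≤ e 0 := h
    have h2 : e 0 ≠ 0 := by omega
    simp [h1, h2]; ring

lemma anti_sum (x y : ℝ) (s : ℕ) :
    ∑ k ∈ antidiagonal s, (x ^ k.1 / k.1.factorial * (y ^ k.2 / k.2.factorial))
      = (x + y) ^ s / s.factorial := by
  rw [(Commute.all x y).add_pow', Finset.sum_div]
  refine Finset.sum_congr rfl fun k hk => ?_
  have hk' := HasAntidiagonal.mem_antidiagonal.mp hk
  have h := Nat.add_choose_mul_factorial_mul_factorial k.2 k.1
  rw [add_comm k.2 k.1, hk'] at h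
  have h' : ((s.choose k.1 : ℝ)) * k.2.factorial * k.1.factorial = s.factorial := by
    exact_mod_cast h
  rw [← h', nsmul_eq_mul]
  have : (s.choose k.1 : ℝ) ≠ 0 := by
    have := Nat.choose_pos (show k.1 ≤ s by omega)
    positivity
  field_simp

lemma anti_sum' (c' : ℝ) (x y : ℝ) (s : ℕ) :
    ∑ k ∈ antidiagonal s, (2 - if k.1 = 0 then c' else 0) *
        (x ^ k.1 / k.1.factorial * (y ^ k.2 / k.2.factorial))
      = (2 * (x + y) ^ s - c' * y ^ s) / s.factorial := by
  simp only [sub_mul, Finset.sum_sub_distrib, ← Finset.mul_sum, anti_sum]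
  rw [Finset.sum_eq_single (0, s)]
  · simp; ring
  · rintro ⟨a, b⟩ hab hne
    have hab' := HasAntidiagonal.mem_antidiagonal.mp hab
    have : a ≠ 0 := by
      rintro rfl
      apply hne
      simp only at hab'
      rw [Prod.mk.injEq]; exact ⟨rfl, by omega⟩
    simp [this]
  · intro h; exact absurd (HasAntidiagonal.mem_antidiagonal.mpr (by simp)) h

theorem Phi_bound (c : ℕ → ℕ → ℝ) (hc : ∀ s q, 1 ≤ c s q) (L : ℕ)
    (hL : ∀ s q, L ≤ s ∨ L ≤ q → c s q = 1) (η : ℝ) (h0 : 0 < η) (h1 : η ≤ 1)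
    (x y z : ℝ) (hx : 0 < x) (hy : 0 < y) (hz : 0 < z) (N : ℕ) :
    ∑ e ∈ Fintype.piFinset (fun _ : Fin 3 => range N),
        wbar c η e * ∏ i, (![x, y, z] i ^ e i / (e i).factorial) ≤
      (∑ s ∈ range L, ∑ q ∈ range L, (c s q - 1) *
        ((2 * (x + y) ^ s - (1 - η) * gg s q * y ^ s) / s.factorial * (z ^ q / q.factorial)))
      + 2 * Real.exp (x + y + z) := by
  classical
  have hxi : ∀ i, 0 < (![x, y, z] : Fin 3 → ℝ) i := by intro i; fin_cases i <;> assumption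
  set h : ℕ → ℕ → ℕ → ℝ := fun k p q => 2 - if k = 0 then (1 - η) * gg (k + p) q else 0 with hh
  have hg2 : ∀ s q, (gg s q : ℝ) ≤ 2 := by
    intro s q
    have : gg s q ≤ 2 := by unfold gg; split_ifs <;> omega
    exact_mod_cast this
  have hh2 : ∀ k p q, h k p q ≤ 2 := by
    intro k p q
    simp only [hh]
    split_ifs
    · have : 0 ≤ (1 - η) * gg (k + p) q := mul_nonneg (by linarith) (by positivity)
      linarith
    · linarith
  have hh0 : ∀ k p q, 0 ≤ h k p q := by
    intro k p q
    simp only [hh]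
    split_ifs
    · have : (1 - η) * gg (k + p) q ≤ 1 * 2 :=
        mul_le_mul (by linarith) (hg2 _ _) (by positivity) (by norm_num)
      linarith
    · linarith
  set G : ℕ → ℕ → ℕ → ℝ := fun k p q => (c (k + p) q - 1) * (h k p q *
    (x ^ k / k.factorial * (y ^ p / p.factorial)) * (z ^ q / q.factorial)) with hG
  have hG0 : ∀ k p q, 0 ≤ G k p q := by
    intro k p q
    have a := hh0 k p q
    have b := hc (k + p) q
    simp only [hG]
    refine mul_nonneg (by linarith) ?_
    positivity
  have step1 : ∀ e : Fin 3 → ℕ, wbar c η e * ∏ i, (![x, y, z] i ^ e i / (e i).factorial) ≤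
      G (e 0) (e 1) (e 2) + 2 * ∏ i, (![x, y, z] i ^ e i / (e i).factorial) := by
    intro e
    rw [wbar_eq]
    have hm : 0 ≤ ∏ i, (![x, y, z] i ^ e i / ((e i).factorial : ℝ)) :=
      prod_nonneg fun i _ => by have := hxi i; positivity
    have e1 : G (e 0) (e 1) (e 2) = (c (e 0 + e 1) (e 2) - 1) * (h (e 0) (e 1) (e 2) *
      ∏ i, (![x, y, z] i ^ e i / ((e i).factorial : ℝ))) := by
      simp only [hG]
      rw [Fin.prod_univ_three]
      simp only [Matrix.cons_val_zero, Matrix.cons_val_one, Matrix.cons_val]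
      ring
    rw [e1]
    have e2 := mul_le_mul_of_nonneg_right (hh2 (e 0) (e 1) (e 2)) hm
    have e3 : (2 - if e 0 = 0 then (1 - η) * (gg (e 0 + e 1) (e 2) : ℝ) else 0)
      = h (e 0) (e 1) (e 2) := rfl
    rw [e3]
    linarith
  refine (Finset.sum_le_sum fun e _ => step1 e).trans ?_
  rw [Finset.sum_add_distrib, ← Finset.mul_sum]
  have part2 : ∑ e ∈ Fintype.piFinset (fun _ : Fin 3 => range N),
      ∏ i, (![x, y, z] i ^ e i / ((e i).factorial : ℝ)) ≤ Real.exp (x + y + z) := by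
    rw [← Finset.prod_univ_sum (fun _ : Fin 3 => range N)
      (fun i k => (![x, y, z] i ^ k / (k.factorial : ℝ)))]
    rw [Fin.prod_univ_three, Real.exp_add, Real.exp_add]
    simp only [Matrix.cons_val_zero, Matrix.cons_val_one, Matrix.cons_val]
    have hxs := Real.sum_le_exp_of_nonneg hx.le N
    have hys := Real.sum_le_exp_of_nonneg hy.le N
    have hzs := Real.sum_le_exp_of_nonneg hz.le N
    gcongr
  have part1 : ∑ e ∈ Fintype.piFinset (fun _ : Fin 3 => range N), G (e 0) (e 1) (e 2) ≤
      ∑ s ∈ range L, ∑ q ∈ range L, (c s q - 1) *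
        ((2 * (x + y) ^ s - (1 - η) * gg s q * y ^ s) / s.factorial * (z ^ q / q.factorial)) := by
    have hr : ∑ s ∈ range L, ∑ q ∈ range L, (c s q - 1) *
        ((2 * (x + y) ^ s - (1 - η) * gg s q * y ^ s) / s.factorial * (z ^ q / q.factorial))
        = ∑ s ∈ range L, ∑ q ∈ range L, ∑ k ∈ antidiagonal s, G k.1 k.2 q := by
      refine Finset.sum_congr rfl fun s _ => Finset.sum_congr rfl fun q _ => ?_
      rw [← anti_sum' ((1 - η) * gg s q) x y s, Finset.sum_mul, Finset.mul_sum]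
      refine Finset.sum_congr rfl fun k hk => ?_
      have hk' := HasAntidiagonal.mem_antidiagonal.mp hk
      simp only [hG, hh, hk']
    rw [hr]
    have hr2 : ∑ s ∈ range L, ∑ q ∈ range L, ∑ k ∈ antidiagonal s, G k.1 k.2 q
        = ∑ a ∈ ((range L ×ˢ range L).sigma (fun b => antidiagonal b.1)),
          G a.2.1 a.2.2 a.1.2 := by
      rw [Finset.sum_sigma, Finset.sum_product]
    rw [hr2, ← Finset.sum_filter_ne_zero]
    refine le_trans (le_of_eq ?_) (Finset.sum_le_sum_of_subset_of_nonneg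
      (s := ((Fintype.piFinset (fun _ : Fin 3 => range N)).filter
        (fun e => G (e 0) (e 1) (e 2) ≠ 0)).image
        (fun e => (⟨(e 0 + e 1, e 2), (e 0, e 1)⟩ : (_ : ℕ × ℕ) × (ℕ × ℕ)))) ?_
      (fun _ _ _ => hG0 _ _ _))
    · rw [Finset.sum_image]
      intro a _ b _ hab
      simp only [Sigma.mk.injEq, heq_eq_eq, Prod.mk.injEq] at hab
      funext i
      fin_cases i
      · exact hab.2.1
      · exact hab.2.2
      · exact hab.1.2
    · intro a ha
      obtain ⟨e, he, rfl⟩ := Finset.mem_image.mp ha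
      have hne := (Finset.mem_filter.mp he).2
      simp only [mem_sigma, mem_product, mem_range, HasAntidiagonal.mem_antidiagonal, and_true]
      by_contra hcon
      apply hne
      have : L ≤ e 0 + e 1 ∨ L ≤ e 2 := by omega
      simp only [hG]
      rw [hL _ _ this]
      ring
  linarith

end RS

end

section

open Finset

namespace RS

lemma sum_bool_fact {ι : Type} [Fintype ι] [DecidableEq ι] :
    ∑ b : ι → Bool, (((#{i | b i = true}).factorial : ℝ) * (#{i | b i = false}).factorial)
      = (Fintype.card ι + 1) * (Fintype.card ι).factorial := by
  have h1 : ∀ b : ι → Bool, #{i | b i = false} = Fintype.card ι - #{i | b i = true} := by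
    intro b
    have := Finset.card_filter_add_card_filter_not (s := (univ : Finset ι)) (fun i => b i = true)
    simp only [Bool.not_eq_true] at this
    rw [Finset.card_univ] at this
    omega
  simp only [h1]
  have h2 : ∑ b : ι → Bool, (((#{i | b i = true}).factorial : ℝ) *
      (Fintype.card ι - #{i | b i = true}).factorial)
      = ∑ s ∈ (univ : Finset ι).powerset, (((#s).factorial : ℝ) * (Fintype.card ι - #s).factorial) := by
    refine Finset.sum_nbij' (fun b => ({i | b i = true} : Finset ι)) (fun s i => decide (i ∈ s))
      ?_ ?_ ?_ ?_ ?_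
    · intro b _; simp
    · intro s _; simp
    · intro b _; funext i; simp
    · intro s _; ext i; simp
    · intro b _; rfl
  rw [h2, Finset.sum_powerset_apply_card
    (fun k => ((k.factorial : ℝ) * (Fintype.card ι - k).factorial)), Finset.card_univ]
  rw [Finset.sum_congr rfl (g := fun _ => ((Fintype.card ι).factorial : ℝ))]
  · simp
  · intro k hk
    have hk' : k ≤ Fintype.card ι := by have := mem_range.mp hk; omega
    have := Nat.choose_mul_factorial_mul_factorial hk'
    rw [nsmul_eq_mul]
    rw [← mul_assoc]
    exact_mod_cast this

lemma exp_quad (u : ℝ) (hu : 0 ≤ u) : Real.exp (-u) ≤ 1 - u + u ^ 2 := by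
  have h := Real.quadratic_le_exp_of_nonneg hu
  rw [Real.exp_neg]
  have hp : 0 < 1 + u + u ^ 2 / 2 := by positivity
  refine (inv_anti₀ hp h).trans ?_
  rw [inv_le_iff_one_le_mul₀ hp]
  have : (1 - u + u ^ 2) * (1 + u + u ^ 2 / 2) = 1 + u ^ 2 / 2 + u ^ 3 / 2 + u ^ 4 / 2 := by ring
  rw [this]
  have : 0 ≤ u ^ 2 / 2 + u ^ 3 / 2 + u ^ 4 / 2 := by positivity
  linarith

theorem typ_sum {m n : ℕ} (l : ℕ → ℕ → ℝ) (B : ℝ) (hl0 : ∀ s q, 0 ≤ l s q) (hlB : ∀ s q, l s q ≤ B)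
    (L : ℕ) (hL : L ≤ 3 * m + 1) (lam : ℝ) (hlam : 0 < lam) (τ : ℝ) (hτ : 0 ≤ τ) (C : ℝ)
    (hC : C * Real.exp (2 * lam) ≤ ∑ s ∈ range L, ∑ q ∈ range L,
      l s q * (lam ^ s / s.factorial * (lam ^ q / q.factorial))) :
    ∑ F : Fin m × Fin 3 → Fin n × Bool, ∏ v, Real.exp (-(τ * l (occ F v true) (occ F v false))) ≤
      (3 * m + 1) * (3 * m).factorial * (lam ^ (3 * m))⁻¹ *
        (Real.exp (2 * lam) * Real.exp (τ ^ 2 * B ^ 2 - τ * C)) ^ n := by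
  classical
  have hcard : Fintype.card (Fin m × Fin 3) = 3 * m := by simp [mul_comm]
  set w : (Bool → ℕ) → ℝ := fun e => Real.exp (-(τ * l (e true) (e false))) with hw
  have hB0 : 0 ≤ B := (hl0 0 0).trans (hlB 0 0)
  have hbox : ∑ e ∈ Fintype.piFinset (fun _ : Bool => range (Fintype.card (Fin m × Fin 3) + 1)),
      w e * ∏ t, ((fun _ : Bool => lam) t ^ e t / (e t).factorial) ≤
      Real.exp (2 * lam) * Real.exp (τ ^ 2 * B ^ 2 - τ * C) := by
    rw [hcard]
    set bx := Fintype.piFinset (fun _ : Bool => range (3 * m + 1)) with hbx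
    have s1 : ∀ e ∈ bx, w e * ∏ t, ((fun _ : Bool => lam) t ^ e t / ((e t).factorial : ℝ)) ≤
        (1 + τ ^ 2 * B ^ 2) * (∏ t : Bool, (lam ^ e t / ((e t).factorial : ℝ))) -
        τ * (l (e true) (e false) * ∏ t : Bool, (lam ^ e t / ((e t).factorial : ℝ))) := by
      intro e _
      have hm : 0 ≤ ∏ t : Bool, (lam ^ e t / ((e t).factorial : ℝ)) :=
        prod_nonneg fun _ _ => by positivity
      have h1 := exp_quad (τ * l (e true) (e false)) (mul_nonneg hτ (hl0 _ _))
      have h2 : (τ * l (e true) (e false)) ^ 2 ≤ τ ^ 2 * B ^ 2 := by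
        rw [mul_pow]
        have := pow_le_pow_left₀ (hl0 (e true) (e false)) (hlB _ _) 2
        gcongr
      have h3 : w e ≤ (1 + τ ^ 2 * B ^ 2) - τ * l (e true) (e false) := by
        simp only [hw]; linarith
      have := mul_le_mul_of_nonneg_right h3 hm
      refine this.trans (le_of_eq (by ring))
    refine (Finset.sum_le_sum s1).trans ?_
    rw [Finset.sum_sub_distrib, ← Finset.mul_sum, ← Finset.mul_sum]
    have a1 : ∑ e ∈ bx, ∏ t : Bool, (lam ^ e t / ((e t).factorial : ℝ)) ≤ Real.exp (2 * lam) := by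
      rw [hbx, ← Finset.prod_univ_sum (fun _ : Bool => range (3 * m + 1))
        (fun _ k => (lam ^ k / (k.factorial : ℝ)))]
      rw [Fintype.prod_bool, two_mul, Real.exp_add]
      have := Real.sum_le_exp_of_nonneg hlam.le (3 * m + 1)
      gcongr
    have a2 : C * Real.exp (2 * lam) ≤
        ∑ e ∈ bx, l (e true) (e false) * ∏ t : Bool, (lam ^ e t / ((e t).factorial : ℝ)) := by
      refine hC.trans ?_
      rw [← Finset.sum_product']
      let φ : ℕ × ℕ → (Bool → ℕ) := fun a b => cond b a.1 a.2
      have hinj : Function.Injective φ := by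
        intro a b hab
        exact Prod.ext (congrFun hab true) (congrFun hab false)
      have h3 : ∑ a ∈ range L ×ˢ range L,
          l a.1 a.2 * (lam ^ a.1 / (a.1.factorial : ℝ) * (lam ^ a.2 / (a.2.factorial : ℝ)))
          = ∑ e ∈ (range L ×ˢ range L).image φ,
            l (e true) (e false) * ∏ t : Bool, (lam ^ e t / ((e t).factorial : ℝ)) := by
        rw [Finset.sum_image (fun a _ b _ h => hinj h)]
        refine Finset.sum_congr rfl fun a _ => ?_
        rw [Fintype.prod_bool]
        rfl
      rw [h3]
      refine Finset.sum_le_sum_of_subset_of_nonneg ?_ ?_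
      · intro e he
        obtain ⟨a, ha, rfl⟩ := Finset.mem_image.mp he
        simp only [mem_product, mem_range] at ha
        simp only [hbx, Fintype.mem_piFinset, mem_range]
        intro b
        cases b
        · show a.2 < _; omega
        · show a.1 < _; omega
      · intro e _ _
        exact mul_nonneg (hl0 _ _) (prod_nonneg fun _ _ => by positivity)
    have hE := Real.exp_pos (2 * lam)
    have a3 := Real.add_one_le_exp (τ ^ 2 * B ^ 2 - τ * C)
    have a4 := mul_le_mul_of_nonneg_left a1 (show 0 ≤ 1 + τ ^ 2 * B ^ 2 by positivity)
    have a5 := mul_le_mul_of_nonneg_left a2 hτ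
    have a6 := mul_le_mul_of_nonneg_left a3 hE.le
    nlinarith
  have hswap : ∑ F : Fin m × Fin 3 → Fin n × Bool,
      ∏ v, Real.exp (-(τ * l (occ F v true) (occ F v false)))
      = ∑ b : Fin m × Fin 3 → Bool, ∑ f : Fin m × Fin 3 → Fin n,
        ∏ v, w (fun t => #{i | f i = v ∧ b i = t}) := by
    rw [Finset.sum_comm, ← Fintype.sum_prod_type']
    refine Fintype.sum_equiv (Equiv.arrowProdEquivProdArrow (Fin m × Fin 3) (fun _ => Fin n) (fun _ => Bool)) _ _ ?_
    intro F
    refine Finset.prod_congr rfl fun v _ => ?_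
    have : ∀ b, occ F v b = #{i | (F i).1 = v ∧ (F i).2 = b} := by
      intro b
      unfold occ
      simp only [Prod.ext_iff]
    simp only [hw, this]
    rfl
  rw [hswap]
  refine (Finset.sum_le_sum fun b _ =>
    genfun n b w (fun e => (Real.exp_pos _).le) (fun _ => lam) (fun _ => hlam) _ hbox).trans ?_
  rw [← Finset.sum_mul]
  refine mul_le_mul_of_nonneg_right (le_of_eq ?_) (by positivity)
  have hb : ∀ b : Fin m × Fin 3 → Bool,
      ∏ t : Bool, (((#{i | b i = t}).factorial : ℝ) * (lam ^ #{i | b i = t})⁻¹)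
      = (((#{i | b i = true}).factorial : ℝ) * (#{i | b i = false}).factorial) *
        (lam ^ (3 * m))⁻¹ := by
    intro b
    have h4 := Finset.card_filter_add_card_filter_not (s := (univ : Finset (Fin m × Fin 3)))
      (fun i => b i = true)
    simp only [Bool.not_eq_true] at h4
    rw [Finset.card_univ, hcard] at h4
    rw [Fintype.prod_bool, ← h4, pow_add, mul_inv]
    ring
  simp only [hb]
  rw [← Finset.sum_mul, sum_bool_fact, hcard]
  push_cast
  ring

lemma bad_pair {m n : ℕ} (i : Fin m) (j j' : Fin 3) (hj : j ≠ j') :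
    #{F : Fin m × Fin 3 → Fin n × Bool | (F (i, j)).1 = (F (i, j')).1} * n ≤ (2 * n) ^ (3 * m) := by
  classical
  have hc : Fintype.card (Fin m × Fin 3 → Fin n × Bool) = (2 * n) ^ (3 * m) := by
    simp [mul_comm]
  rw [← hc]
  have h1 : #{F : Fin m × Fin 3 → Fin n × Bool | (F (i, j)).1 = (F (i, j')).1} * n
      = Fintype.card ({F : Fin m × Fin 3 → Fin n × Bool // (F (i, j)).1 = (F (i, j')).1} × Fin n) := by
    rw [Fintype.card_prod, Fintype.card_subtype, Fintype.card_fin]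
  rw [h1]
  refine Fintype.card_le_of_injective
    (fun q => Function.update q.1.1 (i, j) (q.2, (q.1.1 (i, j)).2)) ?_
  rintro ⟨⟨F, hF⟩, v⟩ ⟨⟨G, hG⟩, u⟩ h
  simp only at h
  have h0 := congrFun h (i, j)
  simp only [Function.update_self, Prod.mk.injEq] at h0
  have hne : (i, j') ≠ (i, j) := fun h => hj (Prod.ext_iff.mp h).2.symm
  have h2 := congrFun h (i, j')
  simp only [Function.update_of_ne hne] at h2
  have hFG : F = G := by
    funext a
    by_cases ha : a = (i, j)
    · subst ha
      refine Prod.ext ?_ h0.2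
      rw [hF, hG, h2]
    · have := congrFun h a
      simpa only [Function.update_of_ne ha] using this
  subst hFG
  rw [h0.1]

theorem bad_sum {m n : ℕ} : (∑ F : Fin m × Fin 3 → Fin n × Bool, bad F) * n ≤
    9 * m * (2 * n) ^ (3 * m) := by
  classical
  have h1 : ∀ F : Fin m × Fin 3 → Fin n × Bool, bad F ≤
      ∑ i : Fin m, ∑ j : Fin 3, ∑ j' : Fin 3,
        if j ≠ j' ∧ (F (i, j)).1 = (F (i, j')).1 then 1 else 0 := by
    intro F
    unfold bad
    rw [Finset.card_filter]
    refine Finset.sum_le_sum fun i _ => ?_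
    split_ifs with h
    · obtain ⟨j, j', hh⟩ := h
      calc 1 = (if j ≠ j' ∧ (F (i, j)).1 = (F (i, j')).1 then 1 else 0) := by rw [if_pos hh]
        _ ≤ ∑ j' : Fin 3, if j ≠ j' ∧ (F (i, j)).1 = (F (i, j')).1 then 1 else 0 :=
          Finset.single_le_sum (f := fun j' => if j ≠ j' ∧ (F (i, j)).1 = (F (i, j')).1 then 1 else 0)
            (fun _ _ => Nat.zero_le _) (mem_univ j')
        _ ≤ _ := Finset.single_le_sum (f := fun j => ∑ j' : Fin 3,
            if j ≠ j' ∧ (F (i, j)).1 = (F (i, j')).1 then 1 else 0)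
            (fun _ _ => Nat.zero_le _) (mem_univ j)
    · exact Nat.zero_le _
  calc (∑ F : Fin m × Fin 3 → Fin n × Bool, bad F) * n
      ≤ (∑ F : Fin m × Fin 3 → Fin n × Bool, ∑ i : Fin m, ∑ j : Fin 3, ∑ j' : Fin 3,
        if j ≠ j' ∧ (F (i, j)).1 = (F (i, j')).1 then 1 else 0) * n :=
        Nat.mul_le_mul_right _ (Finset.sum_le_sum fun F _ => h1 F)
    _ = ∑ i : Fin m, ∑ j : Fin 3, ∑ j' : Fin 3, (∑ F : Fin m × Fin 3 → Fin n × Bool,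
        if j ≠ j' ∧ (F (i, j)).1 = (F (i, j')).1 then 1 else 0) * n := by
        rw [Finset.sum_comm, Finset.sum_mul]
        refine Finset.sum_congr rfl fun i _ => ?_
        rw [Finset.sum_comm, Finset.sum_mul]
        refine Finset.sum_congr rfl fun j _ => ?_
        rw [Finset.sum_comm, Finset.sum_mul]
    _ ≤ ∑ i : Fin m, ∑ j : Fin 3, ∑ j' : Fin 3, (2 * n) ^ (3 * m) := by
        refine Finset.sum_le_sum fun i _ => Finset.sum_le_sum fun j _ => Finset.sum_le_sum fun j' _ => ?_
        by_cases hj : j = j'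
        · simp [hj]
        · have := bad_pair (n := n) i j j' hj
          rw [Finset.card_filter] at this
          simpa [hj] using this
    _ = _ := by
        simp
        ring

end RS

end

section

open Finset

namespace RS

lemma ratio_bound (n m : ℕ) (hn : 1 ≤ n) (hm2 : (m:ℝ) ≤ 4.506 * n + 1) :
    ((m:ℝ) / (4.506 * n)) ^ (3 * m) ≤ Real.exp 6 := by
  have hn' : (1:ℝ) ≤ n := by exact_mod_cast hn
  have hrn : (0:ℝ) < 4.506 * n := by positivity
  have h1 : (m:ℝ) / (4.506 * n) ≤ Real.exp (1 / (4.506 * n)) := by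
    refine le_trans ?_ (Real.add_one_le_exp _)
    rw [div_add_one hrn.ne', div_le_div_iff_of_pos_right hrn]
    linarith
  refine (pow_le_pow_left₀ (by positivity) h1 _).trans ?_
  rw [← Real.exp_nat_mul, Real.exp_le_exp]
  push_cast
  rw [mul_one_div, div_le_iff₀ hrn]
  linarith

/-- the numerical hypothesis -/
def NumHyp (c : ℕ → ℕ → ℝ) (L : ℕ) (η B : ℝ) : Prop :=
  ∀ p : ℝ, 0 ≤ p → p ≤ 1 → ∃ x y z t A' Φ g : ℝ, 0 < x ∧ 0 < y ∧ 0 < z ∧ 0 < t ∧ t < 1 ∧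
      3 * (1 / x) * (p / z) ^ 2 ≤ A' ∧
      3 * ((1 - p) / y) ^ 2 * (p / z) + ((1 - p) / y) ^ 3 ≤ t * A' ∧
      (∑ s ∈ range L, ∑ q ∈ range L, (c s q - 1) *
        ((2 * (x + y) ^ s - (1 - η) * gg s q * y ^ s) / s.factorial * (z ^ q / q.factorial)))
      + 2 * Real.exp (x + y + z) ≤ Φ ∧
      4.506 ^ 3 * (A' * ((1 - t)⁻¹) ^ 2) / (2 * Real.exp 3) ≤ g ∧ g ≤ 1 ∧
      Φ * g ^ (4.506 : ℝ) ≤ Real.exp B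

theorem part3 (c : ℕ → ℕ → ℝ) (hc : ∀ s q, 1 ≤ c s q) (hs : ∀ s q, c s q = c q s) (L : ℕ)
    (hL : ∀ s q, L ≤ s ∨ L ≤ q → c s q = 1) (η : ℝ) (h0 : 0 < η) (h1 : η ≤ 1)
    (B : ℝ) (hnum : NumHyp c L η B) (n m : ℕ) (hn : 1 ≤ n) (hm1 : 4.506 * (n:ℝ) ≤ m)
    (hm2 : (m:ℝ) ≤ 4.506 * n + 1) (b : ℕ) (V : ℝ) :
    (#{F : Fin m × Fin 3 → Fin n × Bool | (∃ A, sat (sg A F)) ∧ bad F ≤ b ∧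
      V ≤ ∏ v, c (occ F v true) (occ F v false)} : ℝ) * (η ^ b * V) ≤
    (2 * n : ℝ) ^ (3 * m) * (((m + 1) * (3 * m + 1)) * (Real.exp 1 * (3 * m + 1)) ^ 6 *
      Real.exp 6 * Real.exp B ^ n) := by
  classical
  have hn' : (1:ℝ) ≤ n := by exact_mod_cast hn
  have hc0 : ∀ s q, 0 ≤ c s q := fun s q => zero_le_one.trans (hc s q)
  set D : ℝ := (2 * Real.exp 3 / 4.506 ^ 3) ^ m * Real.exp B ^ n with hD
  have hWt : ∀ b e, 0 ≤ Wt c η b e := by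
    intro b e
    unfold Wt
    refine mul_nonneg (hc0 _ _) ?_
    split_ifs <;> linarith
  have hup := main_upper (m := m) (n := n) c hc0 η h0 D (by
    intro p hp0 hp1
    obtain ⟨x, y, z, t, A', Φ, g, hx, hy, hz, ht0, ht1, hA, hB, hΦ, hg, hg1, hfin⟩ := hnum p hp0 hp1
    refine ⟨x, y, z, t, A', Φ, hx, hy, hz, ht0, ht1, hA, hB, ?_, ?_⟩
    · exact (Phi_bound c hc L hL η h0 h1 x y z hx hy hz _).trans hΦ
    · have hA0 : 0 ≤ A' := le_trans (by positivity) hA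
      have ht' : 0 < 1 - t := by linarith
      have hW0 : 0 ≤ A' * ((1 - t)⁻¹) ^ 2 := by positivity
      have hg0 : 0 ≤ g := le_trans (by positivity) hg
      have hΦ0 : 0 ≤ Φ := by
        refine le_trans ?_ hΦ
        refine add_nonneg (Finset.sum_nonneg fun s _ => Finset.sum_nonneg fun q _ => ?_) (by positivity)
        refine mul_nonneg (by linarith [hc s q]) (mul_nonneg (div_nonneg ?_ (by positivity))
          (by positivity))
        have hgg : (gg s q : ℝ) ≤ 2 := by
          have : gg s q ≤ 2 := by unfold gg; split_ifs <;> omega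
          exact_mod_cast this
        have h2 : (1 - η) * (gg s q : ℝ) ≤ 1 * 2 :=
          mul_le_mul (by linarith) hgg (by positivity) (by norm_num)
        have h3 : (1 - η) * (gg s q : ℝ) * y ^ s ≤ 1 * 2 * (x + y) ^ s := by
          refine mul_le_mul h2 ?_ (by positivity) (by norm_num)
          exact pow_le_pow_left₀ hy.le (by linarith) s
        linarith
      have hW : A' * ((1 - t)⁻¹) ^ 2 ≤ (2 * Real.exp 3 / 4.506 ^ 3) * g := by
        rw [div_le_iff₀ (by positivity)] at hg
        have e3 := Real.exp_pos 3
        rw [div_mul_eq_mul_div, le_div_iff₀ (by norm_num)]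
        linarith
      rw [← mul_pow]
      calc (A' * ((1 - t)⁻¹) ^ 2) ^ m * Φ ^ n
          ≤ ((2 * Real.exp 3 / 4.506 ^ 3) * g) ^ m * Φ ^ n := by gcongr
        _ = (2 * Real.exp 3 / 4.506 ^ 3) ^ m * (g ^ m * Φ ^ n) := by rw [mul_pow]; ring
        _ ≤ (2 * Real.exp 3 / 4.506 ^ 3) ^ m * ((g ^ (4.506:ℝ)) ^ n * Φ ^ n) := by
            have : g ^ m ≤ (g ^ (4.506:ℝ)) ^ n := by
              rw [← Real.rpow_natCast (g ^ (4.506:ℝ)) n, ← Real.rpow_mul hg0, ← Real.rpow_natCast g m]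
              rcases hg0.eq_or_lt with h | h
              · rw [← h, Real.zero_rpow, Real.zero_rpow]
                · positivity
                · have : (0:ℝ) < m := lt_of_lt_of_le (by positivity) hm1
                  exact this.ne'
              · exact Real.rpow_le_rpow_of_exponent_ge h hg1 hm1
            gcongr
        _ ≤ D := by
            rw [hD, ← mul_pow, mul_comm (g ^ (4.506:ℝ)) Φ]
            have : 0 ≤ g ^ (4.506:ℝ) := Real.rpow_nonneg hg0 _
            gcongr)
  rw [← main_exchange] at hup
  rw [Finset.sum_comm] at hup
  set S : Finset (Fin m × Fin 3 → Fin n × Bool) := {F | (∃ A, sat (sg A F)) ∧ bad F ≤ b ∧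
      V ≤ ∏ v, c (occ F v true) (occ F v false)} with hS
  have hlow : ∀ F ∈ S, η ^ b * V ≤ ∑ A : Fin n → Bool,
      (if sat (sg A F) then ∏ v, Wt c η (A v) (cnt (ty (sg A F)) (fun a => (F a).1) v) else 0) := by
    intro F hF
    obtain ⟨hsat, hbad, hV⟩ := (Finset.mem_filter.mp hF).2
    obtain ⟨A, hA, hle⟩ := lower c hc0 hs η h0 h1 F hsat
    have h3 : η ^ b * V ≤ η ^ bad F * ∏ v, c (occ F v true) (occ F v false) := by
      refine (mul_le_mul_of_nonneg_left hV (by positivity)).trans ?_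
      refine mul_le_mul_of_nonneg_right (pow_le_pow_of_le_one h0.le h1 hbad)
        (prod_nonneg fun v _ => hc0 _ _)
    refine h3.trans (hle.trans ?_)
    refine le_trans (le_of_eq ?_) (Finset.single_le_sum (f := fun A : Fin n → Bool =>
      (if sat (sg A F) then ∏ v, Wt c η (A v) (cnt (ty (sg A F)) (fun a => (F a).1) v) else 0))
      (fun A _ => ?_) (mem_univ A))
    · rw [if_pos hA]
    · split_ifs
      · exact prod_nonneg fun v _ => hWt _ _
      · exact le_rfl
  have hcount : (#S : ℝ) * (η ^ b * V) ≤ ∑ F : Fin m × Fin 3 → Fin n × Bool, ∑ A : Fin n → Bool,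
      (if sat (sg A F) then ∏ v, Wt c η (A v) (cnt (ty (sg A F)) (fun a => (F a).1) v) else 0) := by
    rw [← nsmul_eq_mul, ← Finset.sum_const]
    refine (Finset.sum_le_sum hlow).trans ?_
    refine Finset.sum_le_sum_of_subset_of_nonneg (Finset.subset_univ _) fun F _ _ =>
      Finset.sum_nonneg fun A _ => ?_
    split_ifs
    · exact prod_nonneg fun v _ => hWt _ _
    · exact le_rfl
  refine (hcount.trans hup).trans ?_
  have hf1 := fact_ub m
  have hf2 := fact_ub (2 * m)
  have hrb := ratio_bound n m hn hm2
  have hmm : ((m.factorial : ℝ) * (2*m).factorial) ≤ (Real.exp 1 * (3 * m + 1)) ^ 2 *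
      ((((m:ℝ) / Real.exp 1) ^ m) * (((2 * m : ℕ):ℝ) / Real.exp 1) ^ (2*m)) := by
    calc _ ≤ (Real.exp 1 * (m + 1) * ((m:ℝ) / Real.exp 1) ^ m) *
        (Real.exp 1 * ((2 * m : ℕ) + 1) * (((2 * m : ℕ):ℝ) / Real.exp 1) ^ (2*m)) :=
          mul_le_mul hf1 hf2 (by positivity) (by positivity)
      _ ≤ (Real.exp 1 * (3 * m + 1) * ((m:ℝ) / Real.exp 1) ^ m) *
        (Real.exp 1 * (3 * m + 1) * (((2 * m : ℕ):ℝ) / Real.exp 1) ^ (2*m)) := by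
          have : (0:ℝ) ≤ m := by positivity
          gcongr
          · linarith
          · push_cast; linarith
      _ = _ := by ring
  have hid : ((((m:ℝ) / Real.exp 1) ^ m) * (((2 * m : ℕ):ℝ) / Real.exp 1) ^ (2*m)) *
      (2 * Real.exp 3 / 4.506 ^ 3) ^ m = (2 * n : ℝ) ^ (3 * m) * ((m:ℝ) / (4.506 * n)) ^ (3 * m) := by
    have e3 : Real.exp 3 = Real.exp 1 ^ 3 := by rw [← Real.exp_nat_mul]; norm_num
    rw [pow_mul, pow_mul _ 3 m, pow_mul _ 3 m, ← mul_pow, ← mul_pow, ← mul_pow, e3]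
    congr 1
    push_cast
    field_simp
  set E := Real.exp 1 * (3 * (m:ℝ) + 1) with hE
  have hE0 : 0 < E := by positivity
  calc _ ≤ ((m + 1) * (3 * m + 1)) * (E ^ 4 * (E ^ 2 *
      ((((m:ℝ) / Real.exp 1) ^ m) * (((2 * m : ℕ):ℝ) / Real.exp 1) ^ (2*m)))) * D := by gcongr
    _ = ((m + 1) * (3 * m + 1)) * E ^ 6 * (((((m:ℝ) / Real.exp 1) ^ m) *
        (((2 * m : ℕ):ℝ) / Real.exp 1) ^ (2*m)) * (2 * Real.exp 3 / 4.506 ^ 3) ^ m) *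
        Real.exp B ^ n := by rw [hD]; ring
    _ = ((m + 1) * (3 * m + 1)) * E ^ 6 * ((2 * n : ℝ) ^ (3 * m) *
        ((m:ℝ) / (4.506 * n)) ^ (3 * m)) * Real.exp B ^ n := by rw [hid]
    _ ≤ ((m + 1) * (3 * m + 1)) * E ^ 6 * ((2 * n : ℝ) ^ (3 * m) * Real.exp 6) * Real.exp B ^ n := by
        gcongr
    _ = _ := by ring

theorem part2 (l : ℕ → ℕ → ℝ) (B : ℝ) (hl0 : ∀ s q, 0 ≤ l s q) (hlB : ∀ s q, l s q ≤ B)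
    (L : ℕ) (C : ℝ)
    (hC : C * Real.exp 13.518 ≤ ∑ s ∈ range L, ∑ q ∈ range L,
      l s q * ((6.759:ℝ) ^ s / s.factorial * ((6.759:ℝ) ^ q / q.factorial)))
    (n m : ℕ) (hn : 1 ≤ n) (hm1 : 4.506 * (n:ℝ) ≤ m)
    (hm2 : (m:ℝ) ≤ 4.506 * n + 1) (hL : L ≤ 3 * m + 1) (τ : ℝ) (hτ : 0 ≤ τ) (ε : ℝ) :
    (#{F : Fin m × Fin 3 → Fin n × Bool |
      ∏ v, Real.exp (l (occ F v true) (occ F v false)) < Real.exp (n * (C - ε))} : ℝ)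
      ≤ (2 * n : ℝ) ^ (3 * m) * (Real.exp 1 * (3 * m + 1) ^ 2 * Real.exp 6 *
        Real.exp (τ ^ 2 * B ^ 2 - τ * ε) ^ n) := by
  classical
  have hn' : (1:ℝ) ≤ n := by exact_mod_cast hn
  have h2l : (2:ℝ) * 6.759 = 13.518 := by norm_num
  have ht := typ_sum (m := m) (n := n) l B hl0 hlB L hL 6.759 (by norm_num) τ hτ C
    (by rw [h2l]; exact hC)
  rw [h2l] at ht
  set S : Finset (Fin m × Fin 3 → Fin n × Bool) := {F |
      ∏ v, Real.exp (l (occ F v true) (occ F v false)) < Real.exp (n * (C - ε))} with hS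
  have h1 : (#S : ℝ) * Real.exp (-(τ * (n * (C - ε)))) ≤ ∑ F : Fin m × Fin 3 → Fin n × Bool,
      ∏ v, Real.exp (-(τ * l (occ F v true) (occ F v false))) := by
    rw [← nsmul_eq_mul, ← Finset.sum_const]
    refine le_trans (Finset.sum_le_sum fun F hF => ?_) (Finset.sum_le_sum_of_subset_of_nonneg
      (Finset.subset_univ _) fun F _ _ => prod_nonneg fun v _ => (Real.exp_pos _).le)
    have h3 := (Finset.mem_filter.mp hF).2
    rw [← Real.exp_sum, Real.exp_lt_exp] at h3
    rw [← Real.exp_sum, Real.exp_le_exp, Finset.sum_neg_distrib, ← Finset.mul_sum]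
    have := mul_le_mul_of_nonneg_left h3.le hτ
    linarith
  have h4 := h1.trans ht
  rw [Real.exp_neg, ← div_eq_mul_inv, div_le_iff₀ (Real.exp_pos _)] at h4
  refine h4.trans ?_
  have hf := fact_ub (3 * m)
  have hrb := ratio_bound n m hn hm2
  have hid : (((3 * m : ℕ):ℝ) / Real.exp 1) ^ (3 * m) * ((6.759:ℝ) ^ (3 * m))⁻¹ *
      Real.exp (3 * m) = (2 * n : ℝ) ^ (3 * m) * ((m:ℝ) / (4.506 * n)) ^ (3 * m) := by
    have e3 : Real.exp (3 * m) = Real.exp 1 ^ (3 * m) := by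
      rw [← Real.exp_nat_mul]; push_cast; rw [mul_one]
    rw [e3, ← inv_pow, ← mul_pow, ← mul_pow, ← mul_pow]
    congr 1
    push_cast
    field_simp
    norm_num
    ring
  have he : Real.exp 13.518 ^ n ≤ Real.exp (3 * m) := by
    rw [← Real.exp_nat_mul, Real.exp_le_exp]
    linarith
  have hx : Real.exp (τ ^ 2 * B ^ 2 - τ * C) ^ n * Real.exp (τ * (n * (C - ε)))
      = Real.exp (τ ^ 2 * B ^ 2 - τ * ε) ^ n := by
    rw [← Real.exp_nat_mul, ← Real.exp_nat_mul, ← Real.exp_add]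
    congr 1
    ring
  calc _ ≤ (3 * m + 1) * (Real.exp 1 * ((3 * m : ℕ) + 1) * (((3 * m : ℕ):ℝ) / Real.exp 1) ^ (3 * m))
        * ((6.759:ℝ) ^ (3 * m))⁻¹ * (Real.exp 13.518 * Real.exp (τ ^ 2 * B ^ 2 - τ * C)) ^ n *
        Real.exp (τ * (n * (C - ε))) := by gcongr
    _ = (3 * m + 1) * (Real.exp 1 * ((3 * m : ℕ) + 1) * ((((3 * m : ℕ):ℝ) / Real.exp 1) ^ (3 * m)
        * ((6.759:ℝ) ^ (3 * m))⁻¹ * Real.exp 13.518 ^ n)) * (Real.exp (τ ^ 2 * B ^ 2 - τ * C) ^ n *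
        Real.exp (τ * (n * (C - ε)))) := by rw [mul_pow]; ring
    _ ≤ (3 * m + 1) * (Real.exp 1 * ((3 * m : ℕ) + 1) * ((((3 * m : ℕ):ℝ) / Real.exp 1) ^ (3 * m)
        * ((6.759:ℝ) ^ (3 * m))⁻¹ * Real.exp (3 * m))) * (Real.exp (τ ^ 2 * B ^ 2 - τ * ε) ^ n) := by
        rw [hx]; gcongr
    _ ≤ (3 * m + 1) * (Real.exp 1 * ((3 * m : ℕ) + 1) * ((2 * n : ℝ) ^ (3 * m) * Real.exp 6)) *
        (Real.exp (τ ^ 2 * B ^ 2 - τ * ε) ^ n) := by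
        rw [hid]; gcongr
    _ = _ := by push_cast; ring

theorem part1 (n m : ℕ) (hn : 1 ≤ n) (hm2 : (m:ℝ) ≤ 4.506 * n + 1) (b : ℕ) (ε : ℝ) (hε : 0 < ε)
    (hb : ε * n ≤ b + 1) :
    (#{F : Fin m × Fin 3 → Fin n × Bool | b < bad F} : ℝ) ≤
      (2 * n : ℝ) ^ (3 * m) * (54 / (ε * n)) := by
  classical
  have hn' : (1:ℝ) ≤ n := by exact_mod_cast hn
  have h := bad_sum (m := m) (n := n)
  have h' : (∑ F : Fin m × Fin 3 → Fin n × Bool, (bad F : ℝ)) * n ≤ 9 * m * (2 * n) ^ (3 * m) := by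
    exact_mod_cast h
  have h1 : (#{F : Fin m × Fin 3 → Fin n × Bool | b < bad F} : ℝ) * (ε * n) ≤
      ∑ F : Fin m × Fin 3 → Fin n × Bool, (bad F : ℝ) := by
    rw [← nsmul_eq_mul, ← Finset.sum_const]
    refine le_trans (Finset.sum_le_sum fun F hF => ?_) (Finset.sum_le_sum_of_subset_of_nonneg
      (Finset.subset_univ _) fun F _ _ => Nat.cast_nonneg _)
    have h3 : b + 1 ≤ bad F := (Finset.mem_filter.mp hF).2
    refine hb.trans ?_
    exact_mod_cast h3
  have h2 := mul_le_mul_of_nonneg_right h1 (show (0:ℝ) ≤ n by positivity)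
  have hm6 : (m:ℝ) ≤ 6 * n := by linarith
  have hT : (0:ℝ) ≤ (2 * n) ^ (3 * m) := by positivity
  rw [← mul_div_assoc, le_div_iff₀ (by positivity)]
  have h5 : (#{F : Fin m × Fin 3 → Fin n × Bool | b < bad F} : ℝ) * (ε * n) * n ≤
      ((2 * n : ℝ) ^ (3 * m) * 54) * n := by
    refine (h2.trans h').trans ?_
    nlinarith
  exact le_of_mul_le_mul_right h5 (by linarith)

end RS

end

section

open Finset Filter

namespace RS

lemma poly_exp (K : ℝ) (k : ℕ) (a : ℝ) (ha : 0 < a) :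
    Tendsto (fun n : ℕ => K * ((n:ℝ) ^ k * Real.exp (-a) ^ n)) atTop (nhds 0) := by
  have h := tendsto_pow_const_mul_const_pow_of_abs_lt_one k
    (show |Real.exp (-a)| < 1 by
      rw [abs_of_pos (Real.exp_pos _)]
      rw [Real.exp_lt_one_iff]
      linarith)
  simpa using h.const_mul K

theorem assemble (l : ℕ → ℕ → ℝ) (B : ℝ) (hB : 0 < B) (hl0 : ∀ s q, 0 ≤ l s q)
    (hlB : ∀ s q, l s q ≤ B) (hls : ∀ s q, l s q = l q s)
    (L : ℕ) (hlL : ∀ s q, L ≤ s ∨ L ≤ q → l s q = 0) (C : ℝ)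
    (hC : C * Real.exp 13.518 ≤ ∑ s ∈ range L, ∑ q ∈ range L,
      l s q * ((6.759:ℝ) ^ s / s.factorial * ((6.759:ℝ) ^ q / q.factorial)))
    (η : ℝ) (h0 : 0 < η) (h1 : η ≤ 1) (δ : ℝ) (hδ : 0 < δ)
    (hnum : NumHyp (fun s q => Real.exp (l s q)) L η (C - δ)) :
    Tendsto (fun n : ℕ =>
      (Nat.card {F : Fin (⌈(4.506 : ℝ) * (n : ℝ)⌉₊) → Fin 3 → Fin n × Bool //
          ∃ A : Fin n → Bool, ∀ i, ∃ j, A (F i j).1 = (F i j).2} : ℝ) /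
        ((2 * (n : ℝ)) ^ (3 * ⌈(4.506 : ℝ) * (n : ℝ)⌉₊)))
      atTop (nhds 0) := by
  classical
  have hlogη : Real.log η ≤ 0 := Real.log_nonpos h0.le h1
  set ε : ℝ := δ / (2 * (1 - Real.log η)) with hε
  have hε0 : 0 < ε := div_pos hδ (by linarith)
  have hε1 : ε * (1 - Real.log η) = δ / 2 := by
    rw [hε]; have : (1 - Real.log η) ≠ 0 := by linarith
    field_simp
  set τ : ℝ := ε / (2 * B ^ 2) with hτ
  have hτ0 : 0 ≤ τ := by positivity
  have hτ1 : τ ^ 2 * B ^ 2 - τ * ε = -(ε ^ 2 / (4 * B ^ 2)) := by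
    rw [hτ]; field_simp; ring
  -- the bounding sequence
  have hlim : Tendsto (fun n : ℕ => 54 / ε * ((n:ℝ))⁻¹ +
      ((Real.exp 1 * 19 ^ 2 * Real.exp 6) * ((n:ℝ) ^ 2 * Real.exp (-(ε ^ 2 / (4 * B ^ 2))) ^ n) +
      (7 * 19 * (Real.exp 1 * 19) ^ 6 * Real.exp 6) * ((n:ℝ) ^ 8 * Real.exp (-(δ / 2)) ^ n)))
      atTop (nhds 0) := by
    have a1 : Tendsto (fun n : ℕ => 54 / ε * ((n:ℝ))⁻¹) atTop (nhds 0) := by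
      simpa using (tendsto_inv_atTop_nhds_zero_nat (𝕜 := ℝ)).const_mul (54 / ε)
    have a2 := poly_exp (Real.exp 1 * 19 ^ 2 * Real.exp 6) 2 (ε ^ 2 / (4 * B ^ 2)) (by positivity)
    have a3 := poly_exp (7 * 19 * (Real.exp 1 * 19) ^ 6 * Real.exp 6) 8 (δ / 2) (by positivity)
    simpa using a1.add (a2.add a3)
  refine tendsto_of_tendsto_of_tendsto_of_le_of_le' tendsto_const_nhds hlim ?_ ?_
  · exact Eventually.of_forall fun n => by positivity
  filter_upwards [eventually_ge_atTop (L + 1)] with n hnL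
  have hn : 1 ≤ n := by omega
  have hn' : (1:ℝ) ≤ n := by exact_mod_cast hn
  obtain ⟨m, hm⟩ : ∃ m, m = ⌈(4.506 : ℝ) * (n : ℝ)⌉₊ := ⟨_, rfl⟩
  rw [← hm]
  have hm1 : 4.506 * (n:ℝ) ≤ m := by rw [hm]; exact Nat.le_ceil _
  have hm2 : (m:ℝ) ≤ 4.506 * n + 1 := by
    rw [hm]; exact (Nat.ceil_lt_add_one (by positivity)).le
  have hm6 : (m:ℝ) ≤ 6 * n := by linarith
  have hnm : n ≤ m := by
    have : (n:ℝ) ≤ m := by linarith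
    exact_mod_cast this
  have hLm : L ≤ 3 * m + 1 := by omega
  set T : ℝ := (2 * (n:ℝ)) ^ (3 * m) with hT
  have hT0 : 0 < T := by positivity
  rw [div_le_iff₀ hT0, mul_comm]
  set b := ⌊ε * n⌋₊ with hb
  have hb1 : ε * n ≤ b + 1 := (Nat.lt_floor_add_one _).le
  have hb2 : (b:ℝ) ≤ ε * n := Nat.floor_le (by positivity)
  set c : ℕ → ℕ → ℝ := fun s q => Real.exp (l s q) with hc
  have p1 := part1 n m hn hm2 b ε hε0 hb1
  have p2 := part2 l B hl0 hlB L C hC n m hn hm1 hm2 hLm τ hτ0 ε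
  have p3 := part3 c (fun s q => Real.one_le_exp (hl0 s q)) (fun s q => by simp only [hc, hls s q]) L
    (fun s q h => by simp only [hc, hlL s q h, Real.exp_zero]) η h0 h1 (C - δ) hnum n m hn hm1 hm2 b
    (Real.exp (n * (C - ε)))
  set S1 : Finset (Fin m × Fin 3 → Fin n × Bool) := {F | b < bad F} with hS1
  set S2 : Finset (Fin m × Fin 3 → Fin n × Bool) := {F |
      ∏ v, Real.exp (l (occ F v true) (occ F v false)) < Real.exp (n * (C - ε))} with hS2
  set S3 : Finset (Fin m × Fin 3 → Fin n × Bool) := {F | (∃ A, sat (sg A F)) ∧ bad F ≤ b ∧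
      Real.exp (n * (C - ε)) ≤ ∏ v, c (occ F v true) (occ F v false)} with hS3
  have hcard : Nat.card {F : Fin m → Fin 3 → Fin n × Bool //
      ∃ A : Fin n → Bool, ∀ i, ∃ j, A (F i j).1 = (F i j).2} ≤ #S1 + (#S2 + #S3) := by
    have e1 : Nat.card {F : Fin m → Fin 3 → Fin n × Bool //
      ∃ A : Fin n → Bool, ∀ i, ∃ j, A (F i j).1 = (F i j).2}
      = #({F | ∃ A, sat (sg A F)} : Finset (Fin m × Fin 3 → Fin n × Bool)) := by
      rw [← Fintype.card_subtype, ← Nat.card_eq_fintype_card]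
      refine Nat.card_congr (Equiv.subtypeEquiv (Equiv.curry _ _ _).symm ?_)
      intro F
      simp [sat, sg]
    rw [e1]
    refine (Finset.card_le_card (t := S1 ∪ (S2 ∪ S3)) ?_).trans
      ((Finset.card_union_le _ _).trans (Nat.add_le_add_left (Finset.card_union_le _ _) _))
    intro F hF
    have hsat := (Finset.mem_filter.mp hF).2
    simp only [hS1, hS2, hS3, mem_union, mem_filter, mem_univ, true_and]
    by_cases q1 : b < bad F
    · exact Or.inl q1
    · by_cases q2 : ∏ v, Real.exp (l (occ F v true) (occ F v false)) < Real.exp (n * (C - ε))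
      · exact Or.inr (Or.inl q2)
      · exact Or.inr (Or.inr ⟨hsat, not_lt.mp q1, not_lt.mp q2⟩)
  have hcard' : (Nat.card {F : Fin m → Fin 3 → Fin n × Bool //
      ∃ A : Fin n → Bool, ∀ i, ∃ j, A (F i j).1 = (F i j).2} : ℝ) ≤ #S1 + (#S2 + #S3) := by
    exact_mod_cast hcard
  refine hcard'.trans ?_
  rw [mul_add, mul_add]
  have h3m : 3 * (m:ℝ) + 1 ≤ 19 * n := by linarith
  refine add_le_add ?_ (add_le_add ?_ ?_)
  · refine p1.trans (le_of_eq ?_)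
    rw [hT]
    field_simp
  · refine p2.trans ?_
    rw [hτ1]
    refine mul_le_mul_of_nonneg_left ?_ hT0.le
    calc Real.exp 1 * (3 * m + 1) ^ 2 * Real.exp 6 * Real.exp (-(ε ^ 2 / (4 * B ^ 2))) ^ n
        ≤ Real.exp 1 * (19 * n) ^ 2 * Real.exp 6 * Real.exp (-(ε ^ 2 / (4 * B ^ 2))) ^ n := by gcongr
      _ = _ := by ring
  · have hlow : Real.exp (Real.log η * (ε * n)) * Real.exp (n * (C - ε)) ≤
        η ^ b * Real.exp (n * (C - ε)) := by
      refine mul_le_mul_of_nonneg_right ?_ (Real.exp_pos _).le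
      rw [← Real.rpow_natCast, Real.rpow_def_of_pos h0, Real.exp_le_exp]
      exact mul_le_mul_of_nonpos_left hb2 hlogη
    have h5 := (mul_le_mul_of_nonneg_left hlow (Nat.cast_nonneg (#S3))).trans p3
    have hpos := Real.exp_pos (Real.log η * (ε * n) + n * (C - ε))
    rw [← Real.exp_add, ← le_div_iff₀ hpos] at h5
    refine h5.trans ?_
    rw [div_le_iff₀ hpos]
    have h6 : Real.exp (C - δ) ^ n = Real.exp (-(δ / 2)) ^ n *
        Real.exp (Real.log η * (ε * n) + n * (C - ε)) := by
      rw [← Real.exp_nat_mul, ← Real.exp_nat_mul, ← Real.exp_add]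
      congr 1
      have : Real.log η * (ε * n) + n * (C - ε) = n * C - n * (ε * (1 - Real.log η)) := by ring
      rw [this, hε1]; ring
    rw [h6]
    set X := Real.exp (Real.log η * (ε * n) + n * (C - ε))
    have h7 : (m:ℝ) + 1 ≤ 7 * n := by linarith
    calc T * (((m:ℝ) + 1) * (3 * m + 1) * (Real.exp 1 * (3 * m + 1)) ^ 6 * Real.exp 6 *
          (Real.exp (-(δ / 2)) ^ n * X))
        ≤ T * ((7 * n) * (19 * n) * (Real.exp 1 * (19 * n)) ^ 6 * Real.exp 6 *
          (Real.exp (-(δ / 2)) ^ n * X)) := by gcongr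
      _ = _ := by ring

end RS

end

section

open Finset

namespace RS

def sumTo (f : ℕ → ℕ) : ℕ → ℕ
  | 0 => 0
  | n + 1 => sumTo f n + f n

lemma sumTo_eq (f : ℕ → ℕ) (n : ℕ) : sumTo f n = ∑ i ∈ range n, f i := by
  induction n with
  | zero => rfl
  | succ n ih => rw [Finset.sum_range_succ, ← ih]; rfl

/-- scaled monomial weight with denominators `1000^(2K) * K!^2` cleared -/
def mon (K s q : ℕ) : ℕ :=
  1000 ^ (K - s) * 1000 ^ (K - q) * ((K.factorial / s.factorial) * (K.factorial / q.factorial))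

lemma fac_div (K s : ℕ) (h : s ≤ K) : ((K.factorial / s.factorial : ℕ) : ℝ)
    = (K.factorial : ℝ) / s.factorial := by
  rw [Nat.cast_div (Nat.factorial_dvd_factorial h) (by positivity)]

lemma pow_sub_real (K s : ℕ) (h : s ≤ K) : ((1000:ℝ)) ^ (K - s) = 1000 ^ K / 1000 ^ s := by
  rw [eq_div_iff (by positivity), ← pow_add, Nat.sub_add_cancel h]

lemma mon_cast (K s q : ℕ) (hs : s ≤ K) (hq : q ≤ K) : (mon K s q : ℝ) =
    ((1000:ℝ) ^ K * K.factorial) ^ 2 * (1 / (1000 ^ s * s.factorial) * (1 / (1000 ^ q * q.factorial))) := by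
  unfold mon
  push_cast
  rw [fac_div K s hs, fac_div K q hq, pow_sub_real K s hs, pow_sub_real K q hq]
  field_simp

def tw (M e : ℕ) : ℕ := 129 ^ e * 128 ^ (M - e) - 128 ^ M

lemma tw_cast (M e : ℕ) (h : e ≤ M) : (tw M e : ℝ) = 128 ^ M * ((129 / 128 : ℝ) ^ e - 1) := by
  unfold tw
  have h1 : 128 ^ M ≤ 129 ^ e * 128 ^ (M - e) := by
    calc 128 ^ M = 128 ^ e * 128 ^ (M - e) := by rw [← pow_add]; congr 1; omega
      _ ≤ _ := Nat.mul_le_mul_right _ (Nat.pow_le_pow_left (by norm_num) e)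
  rw [Nat.cast_sub h1]
  push_cast
  have h2 : (128:ℝ) ^ (M - e) = 128 ^ M / 128 ^ e := by
    rw [eq_div_iff (by positivity), ← pow_add, Nat.sub_add_cancel h]
  rw [h2, div_pow]
  ring

def phiTerm (ex : ℕ → ℕ → ℕ) (M K H X y z s q : ℕ) : ℕ :=
  tw M (ex s q) * ((2 * H * X ^ s - (H - 1) * gg s q * y ^ s) * z ^ q * mon K s q)

def phiSum (ex : ℕ → ℕ → ℕ) (M K H X y z : ℕ) : ℕ :=
  sumTo (fun s => sumTo (fun q => phiTerm ex M K H X y z s q) (K + 1)) (K + 1)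

def phiDen (M K H : ℕ) : ℕ := 128 ^ M * H * (1000 ^ K * K.factorial) ^ 2

lemma gg_le (s q : ℕ) : gg s q ≤ 2 := by unfold gg; split_ifs <;> omega

lemma phiTerm_cast (ex : ℕ → ℕ → ℕ) (M K H x y z s q : ℕ) (he : ex s q ≤ M) (hH : 1 ≤ H)
    (hs : s ≤ K) (hq : q ≤ K) :
    (phiTerm ex M K H (x + y) y z s q : ℝ) = phiDen M K H * (((129 / 128 : ℝ) ^ ex s q - 1) *
      ((2 * ((x:ℝ) / 1000 + (y:ℝ) / 1000) ^ s - (1 - 1 / (H:ℝ)) * gg s q * ((y:ℝ) / 1000) ^ s) /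
        s.factorial * (((z:ℝ) / 1000) ^ q / q.factorial))) := by
  have hH' : (0:ℝ) < H := by exact_mod_cast hH
  have h1 : (H - 1) * gg s q * y ^ s ≤ 2 * H * (x + y) ^ s := by
    refine Nat.mul_le_mul ?_ (Nat.pow_le_pow_left (by omega) s)
    calc (H - 1) * gg s q ≤ H * 2 := Nat.mul_le_mul (by omega) (gg_le s q)
      _ = 2 * H := by ring
  unfold phiTerm phiDen
  rw [Nat.cast_mul, tw_cast M _ he, Nat.cast_mul, mon_cast K s q hs hq, Nat.cast_mul, Nat.cast_sub h1]
  push_cast [hH]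
  rw [← add_div]
  simp only [div_pow]
  field_simp

lemma phi_ok (ex : ℕ → ℕ → ℕ) (M K H x y z na U : ℕ) (he : ∀ s q, ex s q ≤ M) (hH : 1 ≤ H)
    (hna : x + y + z ≤ 1000 * na)
    (hchk : phiSum ex M K H (x + y) y z * (10000 ^ na) + 2 * 27183 ^ na * phiDen M K H ≤
      U * phiDen M K H * 10000 ^ na) :
    (∑ s ∈ range (K + 1), ∑ q ∈ range (K + 1), ((129 / 128 : ℝ) ^ ex s q - 1) *
        ((2 * ((x:ℝ) / 1000 + (y:ℝ) / 1000) ^ s - (1 - 1 / (H:ℝ)) * gg s q * ((y:ℝ) / 1000) ^ s) /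
        s.factorial * (((z:ℝ) / 1000) ^ q / q.factorial)))
      + 2 * Real.exp ((x:ℝ) / 1000 + (y:ℝ) / 1000 + (z:ℝ) / 1000) ≤ U := by
  have hH' : (0:ℝ) < H := by exact_mod_cast hH
  have hden : (0:ℝ) < phiDen M K H := by
    unfold phiDen
    push_cast
    positivity
  have h1 : (phiSum ex M K H (x + y) y z : ℝ) = phiDen M K H *
      ∑ s ∈ range (K + 1), ∑ q ∈ range (K + 1), ((129 / 128 : ℝ) ^ ex s q - 1) *
        ((2 * ((x:ℝ) / 1000 + (y:ℝ) / 1000) ^ s - (1 - 1 / (H:ℝ)) * gg s q * ((y:ℝ) / 1000) ^ s) /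
        s.factorial * (((z:ℝ) / 1000) ^ q / q.factorial)) := by
    unfold phiSum
    simp only [sumTo_eq]
    push_cast
    rw [Finset.mul_sum]
    refine Finset.sum_congr rfl fun s hs => ?_
    rw [Finset.mul_sum]
    refine Finset.sum_congr rfl fun q hq => ?_
    have hs' := mem_range.mp hs
    have hq' := mem_range.mp hq
    exact phiTerm_cast ex M K H x y z s q (he s q) hH (by omega) (by omega)
  have h2 : Real.exp ((x:ℝ) / 1000 + (y:ℝ) / 1000 + (z:ℝ) / 1000) ≤ (27183 / 10000 : ℝ) ^ na := by
    have a1 : (x:ℝ) / 1000 + (y:ℝ) / 1000 + (z:ℝ) / 1000 ≤ na * 1 := by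
      have : (x:ℝ) + y + z ≤ 1000 * na := by exact_mod_cast hna
      linarith
    refine (Real.exp_le_exp.mpr a1).trans ?_
    rw [Real.exp_nat_mul]
    refine pow_le_pow_left₀ (Real.exp_pos _).le ?_ na
    exact Real.exp_one_lt_d9.le.trans (by norm_num)
  have h3 : (phiSum ex M K H (x + y) y z : ℝ) * (10000 ^ na) + 2 * 27183 ^ na * phiDen M K H ≤
      U * phiDen M K H * 10000 ^ na := by exact_mod_cast hchk
  rw [h1] at h3
  set S := ∑ s ∈ range (K + 1), ∑ q ∈ range (K + 1), ((129 / 128 : ℝ) ^ ex s q - 1) *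
        ((2 * ((x:ℝ) / 1000 + (y:ℝ) / 1000) ^ s - (1 - 1 / (H:ℝ)) * gg s q * ((y:ℝ) / 1000) ^ s) /
        s.factorial * (((z:ℝ) / 1000) ^ q / q.factorial))
  have h4 : (S + 2 * (27183 / 10000 : ℝ) ^ na) * (phiDen M K H * 10000 ^ na) ≤
      U * (phiDen M K H * 10000 ^ na) := by
    refine le_trans (le_of_eq ?_) (h3.trans (le_of_eq ?_))
    · rw [div_pow]; field_simp
    · ring
  have h5 := le_of_mul_le_mul_right h4 (by positivity)
  linarith

lemma bern (k0 k1 k2 k3 a b p : ℝ) (hab : a < b) (hp0 : a ≤ p) (hp1 : p ≤ b)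
    (h0 : 0 ≤ k0 + k1 * a + k2 * a ^ 2 + k3 * a ^ 3)
    (h1 : 0 ≤ 3 * k0 + k1 * (2 * a + b) + k2 * (a ^ 2 + 2 * a * b) + 3 * k3 * a ^ 2 * b)
    (h2 : 0 ≤ 3 * k0 + k1 * (2 * b + a) + k2 * (b ^ 2 + 2 * a * b) + 3 * k3 * b ^ 2 * a)
    (h3 : 0 ≤ k0 + k1 * b + k2 * b ^ 2 + k3 * b ^ 3) :
    0 ≤ k0 + k1 * p + k2 * p ^ 2 + k3 * p ^ 3 := by
  have hu : 0 ≤ b - p := by linarith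
  have hv : 0 ≤ p - a := by linarith
  have hh : 0 < (b - a) ^ 3 := pow_pos (by linarith) 3
  have key : (k0 + k1 * p + k2 * p ^ 2 + k3 * p ^ 3) * (b - a) ^ 3 =
      (k0 + k1 * a + k2 * a ^ 2 + k3 * a ^ 3) * (b - p) ^ 3 +
      (3 * k0 + k1 * (2 * a + b) + k2 * (a ^ 2 + 2 * a * b) + 3 * k3 * a ^ 2 * b) *
        ((b - p) ^ 2 * (p - a)) +
      (3 * k0 + k1 * (2 * b + a) + k2 * (b ^ 2 + 2 * a * b) + 3 * k3 * b ^ 2 * a) *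
        ((b - p) * (p - a) ^ 2) +
      (k0 + k1 * b + k2 * b ^ 2 + k3 * b ^ 3) * (p - a) ^ 3 := by ring
  have : 0 ≤ (k0 + k1 * p + k2 * p ^ 2 + k3 * p ^ 3) * (b - a) ^ 3 := by
    rw [key]; positivity
  exact nonneg_of_mul_nonneg_left this hh

/-- rational checks for a cell -/
def cellQ (a b x y z v Q : ℚ) : Prop :=
  0 < a ∧ a < b ∧ 0 < x ∧ 0 < y ∧ 0 < z ∧ 0 < v ∧ Q ≤ 1 ∧
  b * v * (x * z ^ 2) < 3 ∧
  4.506 ^ 3 * 27 ≤ 2 * Q * v ^ 2 * (x * z ^ 2) ^ 3 ∧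
  0 ≤ (-(1/y) ^ 3) + (3 * (1/y) ^ 3 - 3 * (1/y) ^ 2 * (1/z)) * a +
    (3 / (x * z ^ 2) + 6 * (1/y) ^ 2 * (1/z) - 3 * (1/y) ^ 3) * a ^ 2 +
    ((1/y) ^ 3 - 3 * (1/y) ^ 2 * (1/z) - v) * a ^ 3 ∧
  0 ≤ 3 * (-(1/y) ^ 3) + (3 * (1/y) ^ 3 - 3 * (1/y) ^ 2 * (1/z)) * (2 * a + b) +
    (3 / (x * z ^ 2) + 6 * (1/y) ^ 2 * (1/z) - 3 * (1/y) ^ 3) * (a ^ 2 + 2 * a * b) +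
    3 * ((1/y) ^ 3 - 3 * (1/y) ^ 2 * (1/z) - v) * a ^ 2 * b ∧
  0 ≤ 3 * (-(1/y) ^ 3) + (3 * (1/y) ^ 3 - 3 * (1/y) ^ 2 * (1/z)) * (2 * b + a) +
    (3 / (x * z ^ 2) + 6 * (1/y) ^ 2 * (1/z) - 3 * (1/y) ^ 3) * (b ^ 2 + 2 * a * b) +
    3 * ((1/y) ^ 3 - 3 * (1/y) ^ 2 * (1/z) - v) * b ^ 2 * a ∧
  0 ≤ (-(1/y) ^ 3) + (3 * (1/y) ^ 3 - 3 * (1/y) ^ 2 * (1/z)) * b +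
    (3 / (x * z ^ 2) + 6 * (1/y) ^ 2 * (1/z) - 3 * (1/y) ^ 3) * b ^ 2 +
    ((1/y) ^ 3 - 3 * (1/y) ^ 2 * (1/z) - v) * b ^ 3

instance (a b x y z v Q : ℚ) : Decidable (cellQ a b x y z v Q) := by unfold cellQ; infer_instance

lemma cell_real (a b x y z v Q : ℚ) (h : cellQ a b x y z v Q) (p : ℝ) (hp0 : (a:ℝ) ≤ p)
    (hp1 : p ≤ b) : ∃ t A' : ℝ, 0 < t ∧ t < 1 ∧
      3 * (1 / (x:ℝ)) * (p / z) ^ 2 ≤ A' ∧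
      3 * ((1 - p) / (y:ℝ)) ^ 2 * (p / z) + ((1 - p) / y) ^ 3 ≤ t * A' ∧
      4.506 ^ 3 * (A' * ((1 - t)⁻¹) ^ 2) / (2 * Real.exp 3) ≤ Q / Real.exp 3 ∧
      (Q:ℝ) / Real.exp 3 ≤ 1 ∧ (0:ℝ) ≤ Q ∧ (0:ℝ) < x ∧ (0:ℝ) < y ∧ (0:ℝ) < z := by
  obtain ⟨ha, hab, hx, hy, hz, hv, hQ1, hbv, hQ, g0, g1, g2, g3⟩ := h
  have ha' : (0:ℝ) < a := by exact_mod_cast ha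
  have hab' : (a:ℝ) < b := by exact_mod_cast hab
  have hx' : (0:ℝ) < x := by exact_mod_cast hx
  have hy' : (0:ℝ) < y := by exact_mod_cast hy
  have hz' : (0:ℝ) < z := by exact_mod_cast hz
  have hv' : (0:ℝ) < v := by exact_mod_cast hv
  have hQ1' : (Q:ℝ) ≤ 1 := by exact_mod_cast hQ1
  have hbv' : (b:ℝ) * v * (x * z ^ 2) < 3 := by exact_mod_cast hbv
  have hQ' : (4.506:ℝ) ^ 3 * 27 ≤ 2 * Q * v ^ 2 * (x * z ^ 2) ^ 3 := by
    have : ((4.506 ^ 3 * 27 : ℚ) : ℝ) ≤ ((2 * Q * v ^ 2 * (x * z ^ 2) ^ 3 : ℚ) : ℝ) := by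
      exact_mod_cast hQ
    push_cast at this
    exact this
  have g0' := (Rat.cast_le (K := ℝ)).mpr g0
  have g1' := (Rat.cast_le (K := ℝ)).mpr g1
  have g2' := (Rat.cast_le (K := ℝ)).mpr g2
  have g3' := (Rat.cast_le (K := ℝ)).mpr g3
  push_cast at g0' g1' g2' g3'
  have hb := bern _ _ _ _ (a:ℝ) b p hab' hp0 hp1 g0' g1' g2' g3'
  have hp : 0 < p := lt_of_lt_of_le ha' hp0
  set α : ℝ := 3 / (x * z ^ 2) with hα
  have hα0 : 0 < α := by positivity
  have hvα : p * v < α := by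
    rw [hα, lt_div_iff₀ (by positivity)]
    refine lt_of_le_of_lt ?_ hbv'
    gcongr
  have e3 : (1:ℝ) ≤ Real.exp 3 := Real.one_le_exp (by norm_num)
  have hQ0 : (0:ℝ) ≤ Q := by
    by_contra hneg
    push Not at hneg
    have : 2 * (Q:ℝ) * v ^ 2 * (x * z ^ 2) ^ 3 < 0 := by
      have : 0 < (v:ℝ) ^ 2 * (x * z ^ 2) ^ 3 := by positivity
      nlinarith
    have h5 : (0:ℝ) < 4.506 ^ 3 * 27 := by norm_num
    linarith
  refine ⟨1 - p * v / α, α * p ^ 2, ?_, ?_, ?_, ?_, ?_, ?_, hQ0, hx', hy', hz'⟩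
  · rw [sub_pos, div_lt_one hα0]; exact hvα
  · have : 0 < p * v / α := by positivity
    linarith
  · refine le_of_eq ?_
    rw [hα]; field_simp
  · have : (1 - p * v / α) * (α * p ^ 2) = α * p ^ 2 - v * p ^ 3 := by field_simp
    rw [this]
    have h6 : 3 * ((1 - p) / (y:ℝ)) ^ 2 * (p / z) + ((1 - p) / y) ^ 3 =
      3 * (1 - p) ^ 2 * p * ((1 / (y:ℝ)) ^ 2 * (1 / z)) + (1 - p) ^ 3 * (1 / (y:ℝ)) ^ 3 := by
      field_simp
    rw [h6]
    generalize (1 / (y:ℝ)) = Y at hb ⊢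
    generalize (1 / (z:ℝ)) = Z at hb ⊢
    rw [← sub_nonneg]
    refine hb.trans (le_of_eq ?_)
    ring
  · have h7 : α * p ^ 2 * ((1 - (1 - p * v / α))⁻¹) ^ 2 = α ^ 3 / v ^ 2 := by
      rw [sub_sub_cancel, inv_div]; field_simp
    rw [h7]
    have h8 : (4.506:ℝ) ^ 3 * (α ^ 3 / v ^ 2) ≤ 2 * Q := by
      rw [← mul_div_assoc, div_le_iff₀ (by positivity), hα, div_pow, ← mul_div_assoc,
        div_le_iff₀ (by positivity)]
      linarith
    rw [div_le_div_iff₀ (by positivity) (by positivity)]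
    have := mul_le_mul_of_nonneg_right h8 (Real.exp_pos 3).le
    linarith
  · exact div_le_one_of_le₀ (hQ1'.trans e3) (by positivity)

lemma exp_lower (k : ℕ) : ((27182818283 / 10000000000 : ℝ)) ^ k ≤ Real.exp k := by
  have : Real.exp (k:ℝ) = Real.exp 1 ^ k := by rw [← Real.exp_nat_mul, mul_one]
  rw [this]
  refine pow_le_pow_left₀ (by norm_num) ?_ k
  refine le_trans (by norm_num) Real.exp_one_gt_d9.le

lemma final_real (U q a b k N : ℕ) (r B f : ℝ) (ha : a ≠ 0) (hr : r * a = b) (hf : 15604 / 10000 ≤ Real.exp f)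
    (hB : B * a + 3 * b = k + f) (hN : 0 < N)
    (h : U ^ a * q ^ b * (10000000000 ^ k * 10000) ≤ 27182818283 ^ k * 15604 * N ^ b) :
    (U:ℝ) * (((q:ℝ) / N) / Real.exp 3) ^ r ≤ Real.exp B := by
  have hg0 : 0 ≤ ((q:ℝ) / N) / Real.exp 3 := by positivity
  have hg : 0 ≤ (((q:ℝ) / N) / Real.exp 3) ^ r := Real.rpow_nonneg hg0 _
  refine le_of_pow_le_pow_left₀ ha (Real.exp_pos _).le ?_
  rw [mul_pow, ← Real.rpow_natCast (_ ^ r) a, ← Real.rpow_mul hg0, hr, Real.rpow_natCast,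
    ← Real.exp_nat_mul]
  have h' : (U:ℝ) ^ a * q ^ b * (10000000000 ^ k * 10000) ≤ 27182818283 ^ k * 15604 * N ^ b := by
    exact_mod_cast h
  have e1 : Real.exp 3 ^ b = Real.exp (3 * b) := by rw [← Real.exp_nat_mul, mul_comm]
  have hN' : (0:ℝ) < N := by exact_mod_cast hN
  rw [div_pow, e1, ← mul_div_assoc, div_le_iff₀ (Real.exp_pos _), ← Real.exp_add]
  have e2 : (a:ℝ) * B + 3 * b = k + f := by linarith
  rw [e2, Real.exp_add]
  have e3 := mul_le_mul (exp_lower k) hf (by norm_num) (Real.exp_pos _).le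
  refine le_trans ?_ e3
  rw [div_pow, div_pow, div_mul_div_comm, ← mul_div_assoc, div_le_div_iff₀ (by positivity) (by positivity)]
  exact h'

end RS

end

section

open Finset

namespace RS

/-- exponent table, rows indexed by the larger index -/
def tbl : List (List ℕ) :=
   [[2152],
    [2137, 2125],
    [2123, 2116, 2109],
    [2108, 2106, 2103, 2099],
    [2094, 2095, 2096, 2095, 2093],
    [2079, 2084, 2087, 2089, 2090, 2089],
    [2064, 2072, 2078, 2082, 2085, 2086, 2086],
    [2050, 2059, 2067, 2074, 2079, 2083, 2085, 2085],
    [2035, 2046, 2055, 2064, 2071, 2077, 2081, 2084, 2085],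
    [2020, 2032, 2043, 2054, 2063, 2070, 2076, 2081, 2084, 2085],
    [2006, 2019, 2031, 2042, 2053, 2062, 2070, 2076, 2081, 2084, 2085],
    [1991, 2005, 2018, 2030, 2042, 2053, 2062, 2070, 2077, 2082, 2085, 2086],
    [1976, 1991, 2005, 2018, 2030, 2042, 2053, 2063, 2071, 2078, 2083, 2086, 2088],
    [1962, 1977, 1991, 2005, 2018, 2031, 2043, 2054, 2063, 2072, 2079, 2084, 2087, 2089],
    [1947, 1962, 1977, 1992, 2006, 2019, 2032, 2044, 2055, 2065, 2073, 2080, 2085, 2089, 2091],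
    [1933, 1948, 1963, 1978, 1993, 2007, 2020, 2033, 2045, 2056, 2066, 2074, 2081, 2087, 2090, 2092],
    [1918, 1934, 1949, 1964, 1979, 1994, 2008, 2022, 2034, 2046, 2057, 2067, 2076, 2083, 2088, 2092, 2094],
    [1903, 1919, 1935, 1950, 1966, 1981, 1995, 2009, 2023, 2036, 2048, 2059, 2069, 2078, 2085, 2090, 2094, 2096],
    [1889, 1905, 1921, 1936, 1952, 1967, 1982, 1997, 2011, 2025, 2037, 2050, 2061, 2071, 2079, 2086, 2092, 2095, 2097],
    [1874, 1890, 1906, 1922, 1938, 1953, 1969, 1984, 1998, 2013, 2026, 2039, 2051, 2062, 2072, 2081, 2088, 2094, 2097, 0],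
    [1859, 1876, 1892, 1908, 1924, 1939, 1955, 1970, 1985, 2000, 2014, 2028, 2041, 2053, 2064, 2074, 2083, 2090, 0, 0, 0],
    [1845, 1861, 1877, 1893, 1909, 1925, 1941, 1957, 1972, 1987, 2002, 2016, 2030, 2043, 2055, 2066, 2076, 0, 0, 0, 0, 0],
    [0, 1846, 1863, 1879, 1895, 1911, 1927, 1943, 1958, 1974, 1989, 2004, 2018, 2031, 2044, 0, 0, 0, 0, 0, 0, 0, 0],
    [0, 0, 1848, 1864, 1881, 1897, 1913, 1929, 1945, 1960, 1976, 1991, 2005, 2020, 0, 0, 0, 0, 0, 0, 0, 0, 0, 0],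
    [0, 0, 0, 1850, 1866, 1882, 1899, 1915, 1931, 1946, 1962, 0, 0, 0, 0, 0, 0, 0, 0, 0, 0, 0, 0, 0, 0],
    [0, 0, 0, 0, 0, 0, 1884, 0, 0, 0, 0, 0, 0, 0, 0, 0, 0, 0, 0, 0, 0, 0, 0, 0, 0, 0]]

def ex (s q : ℕ) : ℕ := (tbl.getD (max s q) []).getD (min s q) 0

lemma ex_symm (s q : ℕ) : ex s q = ex q s := by
  unfold ex; rw [max_comm, min_comm]

lemma ex_zero (s q : ℕ) (h : 26 ≤ s ∨ 26 ≤ q) : ex s q = 0 := by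
  unfold ex
  have h1 : 26 ≤ max s q := by omega
  have h2 : tbl.length ≤ max s q := le_trans (le_of_eq rfl) h1
  rw [List.getD_eq_default _ _ h2]
  rfl

lemma ex_le (s q : ℕ) : ex s q ≤ 2152 := by
  by_cases h : 26 ≤ s ∨ 26 ≤ q
  · rw [ex_zero s q h]; omega
  · have h1 : s < 26 := by omega
    have h2 : q < 26 := by omega
    have key : ∀ s < 26, ∀ q < 26, ex s q ≤ 2152 := by decide +kernel
    exact key s h1 q h2

structure Cell where
  a : ℕ
  b : ℕ
  x : ℕ
  y : ℕ
  z : ℕ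
  v : ℕ
  U : ℕ
  q : ℕ
  na : ℕ

def cells : List Cell :=
   [⟨53, 115, 113, 13586, 1136, 741466976319716, 26853450685536, 724466629702, 15⟩,
    ⟨115, 251, 211, 12853, 1596, 102198779482403, 25229349352764, 761677671030, 15⟩,
    ⟨251, 544, 373, 11874, 2200, 16614663873099, 23316189070255, 760434183124, 15⟩,
    ⟨544, 1135, 616, 10633, 2949, 3206785674953, 20951698121568, 781226000814, 15⟩,
    ⟨1135, 2144, 930, 9206, 3804, 785697958213, 18296341322651, 820926332010, 14⟩,
    ⟨2144, 3381, 1267, 7817, 4643, 267334594801, 15994310808300, 848154671155, 14⟩,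
    ⟨3381, 4171, 1535, 6833, 5242, 138026990306, 14769713392520, 863917069632, 14⟩,
    ⟨4171, 4607, 1698, 6294, 5569, 98586767260, 14301125519338, 870149176752, 14⟩,
    ⟨4607, 4844, 1789, 6008, 5742, 83038118948, 14105218194939, 872855142216, 14⟩,
    ⟨4844, 4973, 1840, 5854, 5835, 75815526077, 14024899531577, 873961685642, 14⟩,
    ⟨4973, 5043, 1867, 5771, 5885, 72271492421, 13971928365980, 874704835898, 14⟩,
    ⟨5043, 5083, 1883, 5725, 5913, 70337647895, 13961657736761, 874849632969, 14⟩,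
    ⟨5083, 5106, 1892, 5699, 5929, 69270297956, 13957531069010, 874905448260, 14⟩,
    ⟨5106, 5124, 1898, 5682, 5939, 68590307378, 13950113010278, 875010483903, 14⟩,
    ⟨5124, 5141, 1902, 5668, 5947, 68085923679, 13926846243393, 875333388854, 14⟩,
    ⟨5141, 5163, 1908, 5652, 5957, 67427718429, 13933163099717, 875245103483, 14⟩,
    ⟨5163, 5200, 1916, 5627, 5972, 66492102045, 13914069399412, 875511584038, 14⟩,
    ⟨5200, 5265, 1931, 5585, 5998, 64868963421, 13915901964680, 875483215825, 14⟩,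
    ⟨5265, 5383, 1957, 5509, 6044, 62125973044, 13887475442403, 875874155725, 14⟩,
    ⟨5383, 5599, 2006, 5371, 6127, 57447934241, 13853503704521, 876351691837, 14⟩,
    ⟨5599, 5986, 2096, 5121, 6279, 49966593377, 13827181386899, 876659846589, 14⟩,
    ⟨5986, 6669, 2264, 4674, 6550, 39216954140, 13853452282715, 876359991557, 14⟩,
    ⟨6669, 7784, 2573, 3894, 7031, 26235654545, 14167036459694, 871970067412, 14⟩,
    ⟨7784, 9256, 3108, 2619, 7846, 14341498690, 15266300837429, 857403796817, 14⟩,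
    ⟨9256, 10000, 3760, 1107, 8858, 8817525769, 17022576933112, 618637532680, 14⟩]

def phiCheck (x y z na U : ℕ) : Bool :=
  decide (x + y + z ≤ 1000 * na) &&
  decide (phiSum ex 2152 25 1073741824 (x + y) y z * (10000 ^ na) +
    2 * 27183 ^ na * phiDen 2152 25 1073741824 ≤
      U * phiDen 2152 25 1073741824 * 10000 ^ na)

def finCheck (U q : ℕ) : Bool :=
  decide (U ^ 500 * q ^ 2253 * (10000000000 ^ 14832 * 10000) ≤
    27182818283 ^ 14832 * 15604 * 1000000000000 ^ 2253)

def ratCheck (c : Cell) : Bool :=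
  decide (cellQ ((c.a : ℚ) / 10000) ((c.b : ℚ) / 10000) ((c.x : ℚ) / 1000) ((c.y : ℚ) / 1000)
    ((c.z : ℚ) / 1000) ((c.v : ℚ) / 1000000000000) ((c.q : ℚ) / 1000000000000))

lemma phi_all : cells.all (fun c => phiCheck c.x c.y c.z c.na c.U) = true := by decide +kernel

lemma fin_all : cells.all (fun c => finCheck c.U c.q) = true := by decide +kernel

lemma rat_all : cells.all ratCheck = true := by decide +kernel

lemma phi_end : phiCheck 50 14000 1136 16 36755315335364 = true := by decide +kernel

lemma fin_end : finCheck 36755315335364 140000000000 = true := by decide +kernel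

def cover : ℕ → List Cell → Bool
  | a, [] => decide (10000 ≤ a)
  | a, c :: l => decide (c.a ≤ a) && cover c.b l

lemma cover_spec (l : List Cell) : ∀ a : ℕ, cover a l = true → ∀ p : ℝ, (a:ℝ) / 10000 ≤ p → p ≤ 1 →
    p = 1 ∧ l = [] ∨ (∃ c ∈ l, (c.a : ℝ) / 10000 ≤ p ∧ p ≤ (c.b : ℝ) / 10000) ∨ p = 1 ∧ 10000 ≤ a := by
  induction l with
  | nil =>
    intro a h p h1 h2
    have h3 : 10000 ≤ a := by simpa [cover] using h
    have h4 : (10000:ℝ) ≤ a := by exact_mod_cast h3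
    left
    exact ⟨by linarith, rfl⟩
  | cons c l ih =>
    intro a h p h1 h2
    simp only [cover, Bool.and_eq_true, decide_eq_true_eq] at h
    have h4 : (c.a:ℝ) ≤ a := by exact_mod_cast h.1
    right; left
    by_cases hp : p ≤ (c.b : ℝ) / 10000
    · exact ⟨c, by simp, by linarith, hp⟩
    · push Not at hp
      rcases ih c.b h.2 p hp.le h2 with h5 | ⟨d, hd, h6⟩ | ⟨h5, h6⟩
      · exfalso
        rw [h5.2] at h
        have h7 : 10000 ≤ c.b := by simpa [cover] using h.2
        have h8 : (10000:ℝ) ≤ c.b := by exact_mod_cast h7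
        linarith
      · exact ⟨d, by simp [hd], h6⟩
      · exfalso
        have h8 : (10000:ℝ) ≤ c.b := by exact_mod_cast h6
        linarith

lemma exp445 : (15604 / 10000 : ℝ) ≤ Real.exp 0.445 := by
  refine le_trans ?_ (Real.sum_le_exp_of_nonneg (by norm_num) 7)
  norm_num [Finset.sum_range_succ, Nat.factorial]

lemma fin_ok (U q : ℕ) (h : finCheck U q = true) :
    (U:ℝ) * (((q:ℝ) / 1000000000000) / Real.exp 3) ^ (4.506:ℝ) ≤ Real.exp (16.1469 - 0.00001) := by
  have h1 := of_decide_eq_true h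
  have := final_real U q 500 2253 14832 1000000000000 4.506 (16.1469 - 0.00001) 0.445 (by norm_num)
    (by norm_num) exp445 (by norm_num) (by norm_num) h1
  push_cast at this
  exact this

lemma phi_ok2 (x y z na U : ℕ) (h : phiCheck x y z na U = true) :
    (∑ s ∈ range 26, ∑ q ∈ range 26, ((129 / 128 : ℝ) ^ ex s q - 1) *
        ((2 * ((x:ℝ) / 1000 + (y:ℝ) / 1000) ^ s - (1 - 1 / 1073741824) * gg s q * ((y:ℝ) / 1000) ^ s) /
        s.factorial * (((z:ℝ) / 1000) ^ q / q.factorial)))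
      + 2 * Real.exp ((x:ℝ) / 1000 + (y:ℝ) / 1000 + (z:ℝ) / 1000) ≤ U := by
  unfold phiCheck at h
  rw [Bool.and_eq_true] at h
  have h1 := of_decide_eq_true h.1
  have h2 := of_decide_eq_true h.2
  have := phi_ok ex 2152 25 1073741824 x y z na U ex_le (by norm_num) h1 h2
  rw [show ((1073741824 : ℕ) : ℝ) = 1073741824 from by norm_num] at this
  exact this

lemma num_hyp : NumHyp (fun s q => (129 / 128 : ℝ) ^ ex s q) 26 (1 / 1073741824) (16.1469 - 0.00001) := by
  intro p hp0 hp1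
  by_cases hp : p ≤ 53 / 10000
  · refine ⟨((50:ℕ):ℝ) / 1000, ((14000:ℕ):ℝ) / 1000, ((1136:ℕ):ℝ) / 1000, 335 / 1000, 13061 / 10000000,
      ((36755315335364 : ℕ) : ℝ), (((140000000000 : ℕ) : ℝ) / 1000000000000) / Real.exp 3, by norm_num, by norm_num, by norm_num,
      by norm_num, by norm_num, ?_, ?_, phi_ok2 _ _ _ _ _ phi_end, ?_, ?_, fin_ok _ _ fin_end⟩
    · push_cast
      have a0 : p ^ 2 ≤ (53 / 10000) ^ 2 := pow_le_pow_left₀ hp0 hp 2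
      rw [div_pow]
      norm_num
      linarith
    · push_cast
      have a1 : (1 - p) ^ 2 ≤ 1 := by nlinarith
      have a2 : (1 - p) ^ 3 ≤ 1 := pow_le_one₀ (by linarith) (by linarith)
      have a3 : (1 - p) ^ 2 * p ≤ 1 * (53 / 10000) := mul_le_mul a1 hp hp0 (by norm_num)
      have e1 : 3 * ((1 - p) / ((14000:ℝ) / 1000)) ^ 2 * (p / ((1136:ℝ) / 1000)) + ((1 - p) / ((14000:ℝ) / 1000)) ^ 3
        = 3 / (14 ^ 2 * 1.136) * ((1 - p) ^ 2 * p) + 1 / 14 ^ 3 * (1 - p) ^ 3 := by ring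
      rw [e1]
      norm_num
      linarith
    · push_cast
      rw [div_le_div_iff₀ (by positivity) (by positivity)]
      have := Real.exp_pos 3
      norm_num
      linarith
    · refine div_le_one_of_le₀ ?_ (by positivity)
      have e3 : (1:ℝ) ≤ Real.exp 3 := Real.one_le_exp (by norm_num)
      refine le_trans ?_ e3
      norm_num
  · push Not at hp
    have hcov : cover 53 cells = true := by decide +kernel
    have hc : ∃ c ∈ cells, (c.a : ℝ) / 10000 ≤ p ∧ p ≤ (c.b : ℝ) / 10000 := by
      rcases cover_spec cells 53 hcov p (by push_cast; linarith) hp1 with h | h | h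
      · exact absurd h.2 (by simp [cells])
      · exact h
      · exact absurd h.2 (by norm_num)
    obtain ⟨c, hmem, hca, hcb⟩ := hc
    have h1 := List.all_eq_true.mp phi_all c hmem
    have h2 := List.all_eq_true.mp fin_all c hmem
    have h3 := of_decide_eq_true (List.all_eq_true.mp rat_all c hmem)
    obtain ⟨t, A', b1, b2, b3, b4, b5, b6, b7, b8, b9, b10⟩ :=
      cell_real _ _ _ _ _ _ _ h3 p (by push_cast; exact hca) (by push_cast; exact hcb)
    push_cast at b3 b4 b5 b6 b7 b8 b9 b10
    exact ⟨(c.x:ℝ) / 1000, (c.y:ℝ) / 1000, (c.z:ℝ) / 1000, t, A', c.U,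
      ((c.q:ℝ) / 1000000000000) / Real.exp 3, b8, b9, b10, b1, b2, b3, b4,
      phi_ok2 _ _ _ _ _ h1, b5, b6, fin_ok _ _ h2⟩

def lSum : ℕ :=
  sumTo (fun s => sumTo (fun q => ex s q * (6759 ^ s * 6759 ^ q * mon 25 s q)) 26) 26

lemma lSum_check : 1540930049 * (1000 ^ 25 * Nat.factorial 25) ^ 2 ≤ lSum := by decide +kernel

lemma lSum_real : (1540930049 : ℝ) ≤ ∑ s ∈ range 26, ∑ q ∈ range 26,
    (ex s q : ℝ) * ((6.759:ℝ) ^ s / s.factorial * ((6.759:ℝ) ^ q / q.factorial)) := by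
  have h0 : (0:ℝ) < (((1000 ^ 25 * Nat.factorial 25) ^ 2 : ℕ) : ℝ) := by
    have : 0 < (1000 ^ 25 * Nat.factorial 25) ^ 2 := by positivity
    exact_mod_cast this
  have h1 : (lSum : ℝ) = (((1000 ^ 25 * Nat.factorial 25) ^ 2 : ℕ) : ℝ) * ∑ s ∈ range 26, ∑ q ∈ range 26,
    (ex s q : ℝ) * ((6.759:ℝ) ^ s / s.factorial * ((6.759:ℝ) ^ q / q.factorial)) := by
    unfold lSum
    simp only [sumTo_eq]
    rw [Nat.cast_sum, Finset.mul_sum]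
    refine Finset.sum_congr rfl fun s hs => ?_
    rw [Nat.cast_sum, Finset.mul_sum]
    refine Finset.sum_congr rfl fun q hq => ?_
    have hs' := mem_range.mp hs
    have hq' := mem_range.mp hq
    rw [Nat.cast_mul, Nat.cast_mul, mon_cast 25 s q (by omega) (by omega)]
    rw [show (6.759:ℝ) = 6759 / 1000 from by norm_num]
    simp only [div_pow]
    generalize hG : Nat.factorial 25 = G
    push_cast
    field_simp
    norm_num
  have h2 : ((1540930049 * (1000 ^ 25 * Nat.factorial 25) ^ 2 : ℕ) : ℝ) ≤ lSum := Nat.cast_le.mpr lSum_check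
  rw [h1, Nat.cast_mul, mul_comm] at h2
  have h3 := le_of_mul_le_mul_left h2 h0
  exact_mod_cast h3

lemma log_lower : (0.0077821404 : ℝ) ≤ Real.log (129 / 128) := by
  rw [Real.le_log_iff_exp_le (by norm_num)]
  refine (Real.exp_bound' (by norm_num) (by norm_num) (n := 6) (by norm_num)).trans ?_
  norm_num [Finset.sum_range_succ, Nat.factorial]

lemma exp_upper : Real.exp 13.518 ≤ 2.7182818286 ^ 13 * 1.678666957 := by
  have h1 : Real.exp 13.518 = Real.exp 1 ^ 13 * Real.exp 0.518 := by
    rw [← Real.exp_nat_mul, ← Real.exp_add]; norm_num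
  rw [h1]
  refine mul_le_mul (pow_le_pow_left₀ (Real.exp_pos _).le Real.exp_one_lt_d9.le 13) ?_ (Real.exp_pos _).le (by positivity)
  refine (Real.exp_bound' (by norm_num) (by norm_num) (n := 10) (by norm_num)).trans ?_
  norm_num [Finset.sum_range_succ, Nat.factorial]

noncomputable def ll (s q : ℕ) : ℝ := ex s q * Real.log (129 / 128)

lemma logpos : (0:ℝ) < Real.log (129 / 128) := Real.log_pos (by norm_num)

theorem final : Filter.Tendsto (fun n : ℕ =>
      (Nat.card {F : Fin (⌈(4.506 : ℝ) * (n : ℝ)⌉₊) → Fin 3 → Fin n × Bool //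
          ∃ A : Fin n → Bool, ∀ i, ∃ j, A (F i j).1 = (F i j).2} : ℝ) /
        ((2 * (n : ℝ)) ^ (3 * ⌈(4.506 : ℝ) * (n : ℝ)⌉₊)))
      Filter.atTop (nhds 0) := by
  have hlp := logpos
  refine assemble ll (2152 * Real.log (129 / 128)) (by positivity) ?_ ?_ ?_ 26 ?_ 16.1469 ?_
    (1 / 1073741824) (by norm_num) (by norm_num) 0.00001 (by norm_num) ?_
  · intro s q; unfold ll; positivity
  · intro s q; unfold ll
    refine mul_le_mul_of_nonneg_right ?_ hlp.le
    exact_mod_cast ex_le s q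
  · intro s q; unfold ll; rw [ex_symm]
  · intro s q h; unfold ll; rw [ex_zero s q h]; simp
  · have e1 : ∑ s ∈ range 26, ∑ q ∈ range 26, ll s q * ((6.759:ℝ) ^ s / s.factorial * ((6.759:ℝ) ^ q / q.factorial))
      = Real.log (129 / 128) * ∑ s ∈ range 26, ∑ q ∈ range 26,
        (ex s q : ℝ) * ((6.759:ℝ) ^ s / s.factorial * ((6.759:ℝ) ^ q / q.factorial)) := by
      rw [Finset.mul_sum]
      refine Finset.sum_congr rfl fun s hs => ?_
      rw [Finset.mul_sum]
      refine Finset.sum_congr rfl fun q hq => ?_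
      unfold ll; ring
    rw [e1]
    have e2 := mul_le_mul log_lower lSum_real (by norm_num) hlp.le
    refine le_trans ?_ e2
    refine (mul_le_mul_of_nonneg_left exp_upper (by norm_num)).trans ?_
    norm_num
  · have : (fun s q => Real.exp (ll s q)) = fun s q => (129 / 128 : ℝ) ^ ex s q := by
      funext s q
      unfold ll
      rw [Real.exp_nat_mul, Real.exp_log (by norm_num)]
    rw [this]
    exact num_hyp

end RS

end

open Filter

/-- Upper bound 4.506 on the random 3-SAT satisfiability threshold.
For each `n` let `m_n = ⌈4.506 n⌉`.  The probability that a uniformly random formula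
`F : Fin m_n → (Fin n × Bool)³` (ordered-clauses model, `(2n)^(3 m_n)` formulae in all)
is satisfiable tends to `0` as `n → ∞`. -/
theorem random_3SAT_threshold_upper_bound_4506 :
    Tendsto (fun n : ℕ =>
      (Nat.card {F : Fin (⌈(4.506 : ℝ) * (n : ℝ)⌉₊) → Fin 3 → Fin n × Bool //
          ∃ A : Fin n → Bool, ∀ i, ∃ j, A (F i j).1 = (F i j).2} : ℝ) /
        ((2 * (n : ℝ)) ^ (3 * ⌈(4.506 : ℝ) * (n : ℝ)⌉₊)))
      atTop (nhds 0) := by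
  exact RS.final
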